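/- arXiv:2404.06308 — 8 statements merged into one kernel-verified Lean document; each statement's English description precedes it below -/
import Mathlib

section
/- Let w be a group-word in n variables and let v = [w(x_1,...,x_n), x_{n+1}, ..., x_{n+m}]. If G is an FC(w)-group, then G is an FC(v)-group. -/
/-- The set of `w`-values in `G`: images of the word `w` (an element of the free
group on `n` generators) under all homomorphisms `FreeGroup (Fin n) →* G`. -/
def wValues {n : ℕ} (w : FreeGroup (Fin n)) (G : Type*) [Group G] : Set G :=
  Set.range fun g : Fin n → G => FreeGroup.lift g w

/-- `G_w^* = G_w ∪ G_w⁻¹`. -/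
def wValuesStar {n : ℕ} (w : FreeGroup (Fin n)) (G : Type*) [Group G] : Set G :=
  wValues w G ∪ (wValues w G)⁻¹

/-- The verbal subgroup `w(G)` generated by all `w`-values. -/
def verbalSubgroup {n : ℕ} (w : FreeGroup (Fin n)) (G : Type*) [Group G] : Subgroup G :=
  Subgroup.closure (wValues w G)

/-- The iterated commutator subgroup `[H, G, ..., G]` with `G` repeated `k` times. -/
def iterCommSub (G : Type*) [Group G] (H : Subgroup G) : ℕ → Subgroup G
  | 0 => H
  | k + 1 => ⁅iterCommSub G H k, (⊤ : Subgroup G)⁆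

/-- The set of conjugates `x^S = {g⁻¹ x g : g ∈ S}`. -/
def conjSet {G : Type*} [Group G] (x : G) (S : Set G) : Set G :=
  (fun g => g⁻¹ * x * g) '' S

/-- `G` is an `FC(w)`-group: every conjugacy set `x^{G_w}` is finite. -/
def IsFCw {n : ℕ} (w : FreeGroup (Fin n)) (G : Type*) [Group G] : Prop :=
  ∀ x : G, (conjSet x (wValues w G)).Finite

/-- `G` is a `BFC(w)`-group: the sets `x^{G_w}` are finite of bounded size. -/
def IsBFCw {n : ℕ} (w : FreeGroup (Fin n)) (G : Type*) [Group G] : Prop :=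
  ∃ c : ℕ, ∀ x : G,
    (conjSet x (wValues w G)).Finite ∧ (conjSet x (wValues w G)).ncard ≤ c

/-- A subgroup `H` is `FC`-embedded in `G` if `x^H` is finite for every `x ∈ G`. -/
def IsFCEmbedded {G : Type*} [Group G] (H : Subgroup G) : Prop :=
  ∀ x : G, (conjSet x (H : Set G)).Finite

/-- A subgroup `H` is `BFC`-embedded in `G` if the sets `x^H` are finite of bounded size. -/
def IsBFCEmbedded {G : Type*} [Group G] (H : Subgroup G) : Prop :=
  ∃ d : ℕ, ∀ x : G,
    (conjSet x (H : Set G)).Finite ∧ (conjSet x (H : Set G)).ncard ≤ d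

/-- A word `w` is `(1/k)`-concise (`k ≥ 1`): in every group `G` with `G_w` finite,
the subgroup `[w(G), G, ..., G]` (with `G` repeated `k - 1` times) is finite. -/
def IsFracConcise {n : ℕ} (w : FreeGroup (Fin n)) (k : ℕ) : Prop :=
  ∀ (G : Type*) [Group G], (wValues w G).Finite →
    ((iterCommSub G (verbalSubgroup w G) (k - 1) : Subgroup G) : Set G).Finite

/-- A word `w` is `0`-concise: in every group `G` with `G_w` finite, some iterated
commutator subgroup `[w(G), G, ..., G]` is finite. -/
def IsZeroConcise {n : ℕ} (w : FreeGroup (Fin n)) : Prop :=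
  ∀ (G : Type*) [Group G], (wValues w G).Finite →
    ∃ k : ℕ, ((iterCommSub G (verbalSubgroup w G) k : Subgroup G) : Set G).Finite

/-- The commutator `[a, b] = a⁻¹ b⁻¹ a b`. -/
def pcomm {G : Type*} [Group G] (a b : G) : G := a⁻¹ * b⁻¹ * a * b

/-- The word `w(x_1, ..., x_n)` viewed in the free group on `n + m` generators. -/
def extendWord {n : ℕ} (m : ℕ) (w : FreeGroup (Fin n)) : FreeGroup (Fin (n + m)) :=
  FreeGroup.map (Fin.castAdd m) w

/-- The word `v = [w(x_1, ..., x_n), x_{n+1}, ..., x_{n+m}]`. -/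
def commWord {n : ℕ} (m : ℕ) (w : FreeGroup (Fin n)) : FreeGroup (Fin (n + m)) :=
  (List.ofFn fun i : Fin m => FreeGroup.of (Fin.natAdd n i)).foldl pcomm (extendWord m w)

/-- The iterated commutator `[y, b, ..., b]` with `b` repeated `k` times. -/
def iterPcomm {G : Type*} [Group G] (y b : G) : ℕ → G
  | 0 => y
  | k + 1 => pcomm (iterPcomm y b k) b

open scoped Pointwise

theorem aux_nlc {L : Type*} [Group L] (N : Subgroup L) (h : N ≤ Subgroup.center L) : N.Normal := by
  refine ⟨fun a ha g => ?_⟩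
  have := Subgroup.mem_center_iff.1 (h ha) g
  rwa [this, mul_inv_cancel_right]

theorem aux_ncard_eq {α β γ : Type*} (f : α → β) (g : α → γ) (T : Set α)
    (h : ∀ a ∈ T, ∀ b ∈ T, (f a = f b ↔ g a = g b)) : (f '' T).ncard = (g '' T).ncard := by
  classical
  have key : ∀ y : f '' T, ∃ a ∈ T, f a = y.1 := fun y => y.2
  choose r hr hfr using key
  refine Set.ncard_congr (fun y hy => g (r ⟨y, hy⟩)) ?_ ?_ ?_
  · intro y hy
    exact ⟨_, hr _, rfl⟩
  · intro y z hy hz hyz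
    have := (h _ (hr _) _ (hr _)).2 hyz
    rw [hfr, hfr] at this
    exact this
  · rintro _ ⟨a, ha, rfl⟩
    exact ⟨f a, ⟨a, ha, rfl⟩, (h _ (hr _) _ ha).1 (hfr _)⟩

theorem aux_fin {M : Type*} [Group M] (V : Subgroup M) (hV : (V : Set M).Finite) (E : Set M)
    (hE : ∀ e ∈ E, ∀ v : M, v * e * v⁻¹ ∈ E) :
    ((QuotientGroup.mk : M → M ⧸ V) '' E).ncard = ((QuotientGroup.mk : M → M ⧸ V) '' E⁻¹).ncard := by
  have h1 := Subgroup.card_mul_eq_card_subgroup_mul_card_quotient V E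
  have h2 := Subgroup.card_mul_eq_card_subgroup_mul_card_quotient V E⁻¹
  have h3 : (E⁻¹ * (V : Set M)) = (E * (V : Set M))⁻¹ := by
    ext y
    simp only [Set.mem_mul, Set.mem_inv, SetLike.mem_coe]
    constructor
    · rintro ⟨a, ha, b, hb, rfl⟩
      refine ⟨b⁻¹ * a⁻¹ * b⁻¹⁻¹, hE _ ha _, b⁻¹, V.inv_mem hb, by group⟩
    · rintro ⟨a, ha, b, hb, hab⟩
      refine ⟨b⁻¹ * a⁻¹ * b, ?_, b⁻¹, V.inv_mem hb, ?_⟩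
      · have := hE a ha b⁻¹
        convert this using 1
        group
      · rw [← inv_inj, ← hab]; group
  rw [h3] at h2
  have h4 : Nat.card ↑((E * (V : Set M))⁻¹) = Nat.card ↑(E * (V : Set M)) := by
    rw [Nat.card_coe_set_eq, Nat.card_coe_set_eq]
    exact Set.ncard_inv _
  rw [h4, h1] at h2
  have : Finite V := hV
  have hp : 0 < Nat.card V := Nat.card_pos
  have := Nat.eq_of_mul_eq_mul_left hp h2
  rw [Nat.card_coe_set_eq, Nat.card_coe_set_eq] at this
  exact this

theorem aux_transport {H L : Type*} [Group H] [Group L] (p : H →* L) (U : Subgroup H)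
    (hk : p.ker ≤ U) (T : Set H) :
    ((QuotientGroup.mk : L → L ⧸ U.map p) '' (p '' T)).ncard
      = ((QuotientGroup.mk : H → H ⧸ U) '' T).ncard := by
  rw [Set.image_image]
  apply aux_ncard_eq
  intro a _ b _
  rw [QuotientGroup.eq, QuotientGroup.eq, ← map_inv, ← map_mul, ← Subgroup.mem_comap,
    Subgroup.comap_map_eq, sup_eq_left.2 hk]

theorem aux_normal_image {H L : Type*} [Group H] [Group L] (p : H →* L)
    (hp : Function.Surjective p) (F : Set H) (hF : ∀ e ∈ F, ∀ v : H, v * e * v⁻¹ ∈ F) :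
    ∀ e ∈ p '' F, ∀ v : L, v * e * v⁻¹ ∈ p '' F := by
  rintro _ ⟨e, he, rfl⟩ v
  obtain ⟨v, rfl⟩ := hp v
  exact ⟨_, hF e he v, by simp⟩

theorem aux_center {L : Type*} [Group L] (F : Set L) (hfin : F.Finite)
    (hF : ∀ e ∈ F, ∀ v : L, v * e * v⁻¹ ∈ F) (hgen : Subgroup.closure F = ⊤) :
    (Subgroup.center L).FiniteIndex := by
  have : Finite F := hfin
  have h1 : Subgroup.center L = ⨅ f : F, Subgroup.centralizer {(f : L)} := by
    rw [← Subgroup.centralizer_univ, ← Subgroup.coe_top, ← hgen, Subgroup.centralizer_closure]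
    ext y
    simp [Subgroup.mem_centralizer_iff, Subgroup.mem_iInf]
  rw [h1]
  apply Subgroup.finiteIndex_iInf
  intro f
  have : Finite (L ⧸ Subgroup.centralizer {(f : L)}) := by
    let φ : L ⧸ Subgroup.centralizer {(f : L)} → F :=
      Quotient.lift (fun v : L => (⟨v * f * v⁻¹, hF f f.2 v⟩ : F)) (by
        intro a b hab
        have hab : a⁻¹ * b ∈ Subgroup.centralizer {(f : L)} := QuotientGroup.leftRel_apply.1 hab
        rw [Subgroup.mem_centralizer_singleton_iff] at hab
        apply Subtype.ext
        show a * f * a⁻¹ = b * f * b⁻¹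
        have : a * (a⁻¹ * b * f) * b⁻¹ = a * (f * (a⁻¹ * b)) * b⁻¹ := by rw [hab]
        simp only [mul_assoc, mul_inv_cancel_left, mul_inv_cancel, mul_one] at this ⊢
        exact this.symm)
    apply Finite.of_injective φ
    intro a b
    induction a using QuotientGroup.induction_on with | _ a => ?_
    induction b using QuotientGroup.induction_on with | _ b => ?_
    intro hab
    have hab : a * f * a⁻¹ = b * f * b⁻¹ := congrArg Subtype.val hab
    rw [QuotientGroup.eq, Subgroup.mem_centralizer_singleton_iff]
    have : a⁻¹ * (a * f * a⁻¹) * b = a⁻¹ * (b * f * b⁻¹) * b := by rw [hab]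
    simp only [mul_assoc, inv_mul_cancel_left, inv_mul_cancel, mul_one] at this ⊢
    exact this.symm
  exact Subgroup.finiteIndex_of_finite_quotient

theorem aux_A {L : Type*} [Group L] (F : Set L) (hfin : F.Finite)
    (hF : ∀ e ∈ F, ∀ v : L, v * e * v⁻¹ ∈ F) (hgen : Subgroup.closure F = ⊤)
    (U : Subgroup L) :
    ((QuotientGroup.mk : L → L ⧸ U) '' F).ncard = ((QuotientGroup.mk : L → L ⧸ U) '' F⁻¹).ncard := by
  have := aux_center F hfin hF hgen
  let N : Subgroup L := U ⊓ Subgroup.center L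
  have hN : N.Normal := aux_nlc _ inf_le_right
  let p := QuotientGroup.mk' N
  have hp : Function.Surjective p := QuotientGroup.mk'_surjective N
  have hk : p.ker ≤ U := by
    rw [QuotientGroup.ker_mk']; exact inf_le_left
  rw [← aux_transport p U hk, ← aux_transport p U hk]
  have : p '' F⁻¹ = (p '' F)⁻¹ := Set.image_inv p F
  rw [this]
  apply aux_fin _ _ _ (aux_normal_image p hp F hF)
  have h2 : Finite (U ⧸ (Subgroup.center L).subgroupOf U) := inferInstance
  have hr : (Set.range (fun u : U => p u)).Finite := by
    let φ : U ⧸ (Subgroup.center L).subgroupOf U → L ⧸ N :=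
      Quotient.lift (fun u : U => p u) (by
        intro a b hab
        have hab := QuotientGroup.leftRel_apply.1 hab
        show (QuotientGroup.mk (a : L) : L ⧸ N) = QuotientGroup.mk (b : L)
        rw [QuotientGroup.eq]
        exact ⟨U.mul_mem (U.inv_mem a.2) b.2, hab⟩)
    apply (Set.finite_range φ).subset
    rintro _ ⟨u, rfl⟩
    exact ⟨QuotientGroup.mk u, rfl⟩
  apply hr.subset
  rintro _ ⟨u, hu, rfl⟩
  exact ⟨⟨u, hu⟩, rfl⟩

theorem aux_B {H : Type*} [Group H] (F : Set H)
    (hF : ∀ e ∈ F, ∀ v : H, v * e * v⁻¹ ∈ F) (hgen : Subgroup.closure F = ⊤)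
    (U B : Subgroup H) [B.Normal] (hBU : B ≤ U)
    (hfin : ((QuotientGroup.mk' B) '' F).Finite) :
    ((QuotientGroup.mk : H → H ⧸ U) '' F).ncard = ((QuotientGroup.mk : H → H ⧸ U) '' F⁻¹).ncard := by
  let p := QuotientGroup.mk' B
  have hp : Function.Surjective p := QuotientGroup.mk'_surjective B
  have hk : p.ker ≤ U := by
    rw [QuotientGroup.ker_mk']; exact hBU
  rw [← aux_transport p U hk, ← aux_transport p U hk]
  have : p '' F⁻¹ = (p '' F)⁻¹ := Set.image_inv p F
  rw [this]
  apply aux_A _ hfin (aux_normal_image p hp F hF)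
  rw [← MonoidHom.map_closure, hgen, ← MonoidHom.range_eq_map, MonoidHom.range_eq_top.2 hp]

/-- Normal and FC sets. -/
def NFC {G : Type*} [Group G] (S : Set G) : Prop :=
  (∀ e ∈ S, ∀ v : G, v * e * v⁻¹ ∈ S) ∧ ∀ x : G, (conjSet x S).Finite

theorem aux_inv {G : Type*} [Group G] (S : Set G) (h : NFC S) (x : G) :
    ((fun g => g * x * g⁻¹) '' S).Finite := by
  classical
  by_contra hinf
  obtain ⟨hS, hfc⟩ := h
  obtain ⟨W, hW, hWfin, hWcard⟩ :=
    Set.Infinite.exists_subset_ncard_eq hinf ((conjSet x S).ncard + 1)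
  have hW' : ∃ T : Set G, T ⊆ S ∧ T.Finite ∧ (fun g => g * x * g⁻¹) '' T = W := by
    have key : ∀ y : W, ∃ a ∈ S, a * x * a⁻¹ = y.1 := fun y => hW y.2
    choose r hr hr2 using key
    have : Finite W := hWfin
    refine ⟨Set.range r, ?_, Set.finite_range r, ?_⟩
    · rintro _ ⟨y, rfl⟩
      exact hr y
    · ext y
      constructor
      · rintro ⟨_, ⟨z, rfl⟩, rfl⟩
        simp only [hr2]
        exact z.2
      · intro hy
        exact ⟨_, ⟨⟨y, hy⟩, rfl⟩, hr2 _⟩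
  obtain ⟨T, hTS, hTfin, hTW⟩ := hW'
  let H : Subgroup G := Subgroup.closure T
  let F : Set H := {s | (s : G) ∈ S}
  have hF : ∀ e ∈ F, ∀ v : H, v * e * v⁻¹ ∈ F := fun e he v => hS e he v
  have hgen : Subgroup.closure F = ⊤ := by
    rw [eq_top_iff, ← Subgroup.closure_closure_coe_preimage (k := T)]
    apply Subgroup.closure_mono
    intro t ht
    exact hTS ht
  let U : Subgroup H := (Subgroup.centralizer {x}).subgroupOf H
  let B : Subgroup H := U ⊓ Subgroup.center H
  have hB : B.Normal := aux_nlc _ inf_le_right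
  have hU : ∀ a : H, a ∈ U ↔ (a : G) * x = x * a := by
    intro a
    rw [Subgroup.mem_subgroupOf, Subgroup.mem_centralizer_singleton_iff]
  have hfin : ((QuotientGroup.mk' B) '' F).Finite := by
    let R : Set G := insert x T
    have : Finite R := hTfin.insert x
    let ψ : H → (R → G) := fun s r => (s : G)⁻¹ * r * s
    have h1 : (ψ '' F).Finite := by
      apply (Set.Finite.pi' (fun r : R => hfc (r : G))).subset
      rintro _ ⟨s, hs, rfl⟩ r
      exact ⟨s, hs, rfl⟩
    have h2 : ∀ a b : H, ψ a = ψ b → QuotientGroup.mk' B a = QuotientGroup.mk' B b := by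
      intro a b hab
      have h3 : ∀ r ∈ R, ((b * a⁻¹ : H) : G) * r = r * ((b * a⁻¹ : H) : G) := by
        intro r hr
        have h4 : (a : G)⁻¹ * r * a = (b : G)⁻¹ * r * b := congrFun hab ⟨r, hr⟩
        have h5 : (b : G) * ((a : G)⁻¹ * r * a) * (a : G)⁻¹
          = (b : G) * ((b : G)⁻¹ * r * b) * (a : G)⁻¹ := by rw [h4]
        simp only [mul_assoc, mul_inv_cancel_left, mul_inv_cancel, mul_one,
          Subgroup.coe_mul, Subgroup.coe_inv] at h5 ⊢
        exact h5
      have h6 : b * a⁻¹ ∈ B := by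
        refine ⟨(hU _).2 (h3 x (Set.mem_insert _ _)), ?_⟩
        refine Subgroup.mem_center_iff.2 ?_
        intro g
        have h7 : H ≤ Subgroup.centralizer {((b * a⁻¹ : H) : G)} := by
          rw [Subgroup.closure_le]
          intro t ht
          rw [SetLike.mem_coe, Subgroup.mem_centralizer_singleton_iff]
          exact (h3 t (Set.mem_insert_of_mem _ ht)).symm
        have h8 := h7 g.2
        rw [Subgroup.mem_centralizer_singleton_iff] at h8
        exact Subtype.ext h8
      have h9 : QuotientGroup.mk' B (b * a⁻¹) = 1 := (QuotientGroup.eq_one_iff _).2 h6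
      rw [map_mul, map_inv, mul_inv_eq_one] at h9
      exact h9.symm
    have h3 : ∀ y : (R → G), ((QuotientGroup.mk' B) '' (ψ ⁻¹' {y})).Finite := by
      intro y
      apply Set.Subsingleton.finite
      rintro _ ⟨a, ha, rfl⟩ _ ⟨b, hb, rfl⟩
      exact h2 a b (ha.trans hb.symm)
    apply (h1.biUnion (fun y _ => h3 y)).subset
    rintro _ ⟨s, hs, rfl⟩
    exact Set.mem_biUnion (Set.mem_image_of_mem ψ hs) ⟨s, rfl, rfl⟩
  have main := aux_B F hF hgen U B inf_le_left hfin
  have hmk : ∀ a b : H, (QuotientGroup.mk a : H ⧸ U) = QuotientGroup.mk b ↔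
      (a : G) * x * (a : G)⁻¹ = b * x * (b : G)⁻¹ := by
    intro a b
    rw [QuotientGroup.eq, hU]
    simp only [Subgroup.coe_mul, Subgroup.coe_inv]
    constructor
    · intro h
      have : (a : G) * ((a : G)⁻¹ * b * x) * (b : G)⁻¹ = a * (x * ((a : G)⁻¹ * b)) * (b : G)⁻¹ := by
        rw [h]
      simp only [mul_assoc, mul_inv_cancel_left, mul_inv_cancel, mul_one] at this ⊢
      exact this.symm
    · intro h
      have : (a : G)⁻¹ * (a * x * (a : G)⁻¹) * b = (a : G)⁻¹ * (b * x * (b : G)⁻¹) * b := by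
        rw [h]
      simp only [mul_assoc, inv_mul_cancel_left, inv_mul_cancel, mul_one] at this ⊢
      exact this.symm
  rw [aux_ncard_eq _ (fun a : H => (a : G) * x * (a : G)⁻¹) F (fun a _ b _ => hmk a b),
    aux_ncard_eq _ (fun a : H => (a : G) * x * (a : G)⁻¹) F⁻¹ (fun a _ b _ => hmk a b)] at main
  have hsub : (fun a : H => (a : G) * x * (a : G)⁻¹) '' F⁻¹ ⊆ conjSet x S := by
    rintro _ ⟨a, ha, rfl⟩
    refine ⟨(a : G)⁻¹, ha, ?_⟩
    simp
  have hle := Set.ncard_le_ncard hsub (hfc x)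
  have hge : W ⊆ (fun a : H => (a : G) * x * (a : G)⁻¹) '' F := by
    rw [← hTW]
    rintro _ ⟨t, ht, rfl⟩
    exact ⟨⟨t, Subgroup.subset_closure ht⟩, hTS ht, rfl⟩
  have hFf : ((fun a : H => (a : G) * x * (a : G)⁻¹) '' F).Finite := by
    have h1 : ((fun a : H => (a : G) * x * (a : G)⁻¹) '' F).ncard ≠ 0 ∨ F = ∅ := by
      rcases Set.eq_empty_or_nonempty F with h | ⟨f, hf⟩
      · exact Or.inr h
      · left
        rw [main]
        have h2 := (hfc x).subset hsub
        have h3 : ((fun a : H => (a : G) * x * (a : G)⁻¹) '' F⁻¹).Nonempty :=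
          ⟨_, ⟨f⁻¹, by simpa using hf, rfl⟩⟩
        exact ((Set.ncard_pos h2).2 h3).ne'
    rcases h1 with h1 | h1
    · exact Set.finite_of_ncard_ne_zero h1
    · rw [h1]; simp
  have := Set.ncard_le_ncard hge hFf
  omega

theorem aux_comm {G : Type*} [Group G] (S : Set G) (h : NFC S) :
    NFC {y : G | ∃ s ∈ S, ∃ g : G, y = pcomm s g} := by
  refine ⟨?_, ?_⟩
  · rintro _ ⟨s, hs, g, rfl⟩ v
    refine ⟨_, h.1 s hs v, v * g * v⁻¹, ?_⟩
    simp only [pcomm]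
    group
  · intro x
    have h1 := aux_inv S h x
    apply (h1.biUnion (fun y _ => h.2 y)).subset
    rintro _ ⟨_, ⟨s, hs, g, rfl⟩, rfl⟩
    refine Set.mem_biUnion (Set.mem_image_of_mem _ hs) ⟨g⁻¹ * s * g⁻¹⁻¹, h.1 s hs _, ?_⟩
    simp only [pcomm]
    group

theorem aux_fold {G : Type*} [Group G] (m : ℕ) : ∀ (S : Set G), NFC S → ∀ x : G,
    (conjSet x {y : G | ∃ s ∈ S, ∃ l : List G, l.length = m ∧ y = l.foldl pcomm s}).Finite := by
  induction m with
  | zero =>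
    intro S h x
    apply (h.2 x).subset
    rintro _ ⟨_, ⟨s, hs, l, hl, rfl⟩, rfl⟩
    rw [List.length_eq_zero_iff] at hl
    subst hl
    exact ⟨s, hs, rfl⟩
  | succ m ih =>
    intro S h x
    apply (ih _ (aux_comm S h) x).subset
    rintro _ ⟨_, ⟨s, hs, l, hl, rfl⟩, rfl⟩
    cases l with
    | nil => simp at hl
    | cons g l =>
      refine ⟨_, ⟨pcomm s g, ⟨s, hs, g, rfl⟩, l, by simpa using hl, rfl⟩, rfl⟩

theorem aux_hom {G K : Type*} [Group G] [Group K] (f : G →* K) (l : List G) : ∀ a : G,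
    f (l.foldl pcomm a) = (l.map f).foldl pcomm (f a) := by
  induction l with
  | nil => intro a; rfl
  | cons g l ih =>
    intro a
    simp only [List.foldl_cons, List.map_cons, ih]
    simp [pcomm]

theorem aux_wnormal {n : ℕ} (w : FreeGroup (Fin n)) (G : Type*) [Group G] :
    ∀ e ∈ wValues w G, ∀ v : G, v * e * v⁻¹ ∈ wValues w G := by
  rintro _ ⟨g, rfl⟩ v
  refine ⟨fun i => v * g i * v⁻¹, ?_⟩
  have : FreeGroup.lift (fun i => v * g i * v⁻¹)
      = (MulAut.conj v).toMonoidHom.comp (FreeGroup.lift g) := by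
    ext i
    simp
  show FreeGroup.lift (fun i => v * g i * v⁻¹) w = _
  rw [this]
  simp

/-- if `G` is an `FC(w)`-group, then `G` is an `FC(v)`-group, where
`v = [w, x_{n+1}, ..., x_{n+m}]`. -/
theorem statement_1 {n m : ℕ} (w : FreeGroup (Fin n)) (G : Type*) [Group G]
    (h : IsFCw w G) : IsFCw (commWord m w) G := by
  intro x
  apply (aux_fold m _ ⟨aux_wnormal w G, h⟩ x).subset
  rintro _ ⟨_, ⟨g, rfl⟩, rfl⟩
  refine ⟨_, ⟨FreeGroup.lift (fun i => g (Fin.castAdd m i)) w, ⟨_, rfl⟩,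
    ((List.ofFn fun i : Fin m => FreeGroup.of (Fin.natAdd n i)).map (FreeGroup.lift g)),
    by simp, ?_⟩, rfl⟩
  simp only [commWord]
  rw [aux_hom]
  congr 1
  rw [extendWord]
  have : (FreeGroup.lift g).comp (FreeGroup.map (Fin.castAdd m))
      = FreeGroup.lift (fun i => g (Fin.castAdd m i)) := by
    ext i
    simp
  exact DFunLike.congr_fun this w
end

section
/- Let m ∈ ℕ and let w be a (1/(m+1))-concise group-word in n variables; set v = [w(x_1,...,x_n), x_{n+1}, ..., x_{n+m}]. Let G be an FC(w)-group and let B be a finite subset of G_v^*. Then for every x ∈ G there exists a positive integer e such that b^e lies in the center of the subgroup generated by x together with B, for every b ∈ B. -/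
theorem foldl_pcomm_mem {K : Type*} [Group K] (H : Subgroup K) (l : List K) :
    ∀ (k : ℕ) (a : K), a ∈ iterCommSub K H k →
      l.foldl pcomm a ∈ iterCommSub K H (k + l.length) := by
  induction l with
  | nil => intro k a h; simpa using h
  | cons c l ih =>
    intro k a h
    have h1 : pcomm a c ∈ iterCommSub K H (k + 1) := by
      have := Subgroup.commutator_mem_commutator (inv_mem h) (Subgroup.mem_top c⁻¹)
      simpa [iterCommSub, pcomm, commutatorElement_def] using this
    have := ih (k + 1) _ h1
    have e : k + (c :: l).length = k + 1 + l.length := by simp; omega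
    rw [e]
    exact this

theorem map_foldl_pcomm {K L : Type*} [Group K] [Group L] (f : K →* L) (l : List K) :
    ∀ a : K, f (l.foldl pcomm a) = (l.map f).foldl pcomm (f a) := by
  induction l with
  | nil => intro a; rfl
  | cons c l ih => intro a; simp [ih, pcomm]

theorem commWord_value_mem {n m : ℕ} (w : FreeGroup (Fin n)) {K : Type*} [Group K]
    (g : Fin (n + m) → K) :
    FreeGroup.lift g (commWord m w) ∈ iterCommSub K (verbalSubgroup w K) m := by
  unfold commWord
  rw [map_foldl_pcomm]
  have h0 : FreeGroup.lift g (extendWord m w) ∈ iterCommSub K (verbalSubgroup w K) 0 := by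
    apply Subgroup.subset_closure
    refine ⟨fun i => g (Fin.castAdd m i), ?_⟩
    have : FreeGroup.lift (fun i => g (Fin.castAdd m i)) =
        (FreeGroup.lift g).comp (FreeGroup.map (Fin.castAdd m)) := by
      ext i; simp
    simp [this, extendWord]
  have := foldl_pcomm_mem (verbalSubgroup w K)
    ((List.ofFn fun i : Fin m => FreeGroup.of (Fin.natAdd n i)).map (FreeGroup.lift g)) 0 _ h0
  simpa using this

theorem lift_comp_hom {n : ℕ} (w : FreeGroup (Fin n)) {K L : Type*} [Group K] [Group L]
    (f : K →* L) (g : Fin n → K) :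
    f (FreeGroup.lift g w) = FreeGroup.lift (fun i => f (g i)) w := by
  have : FreeGroup.lift (fun i => f (g i)) = f.comp (FreeGroup.lift g) := by
    ext i; simp
  simp [this]

theorem value_pow_commute.{u, v} {n m : ℕ} (w : FreeGroup (Fin n))
    (hw : IsFracConcise.{u} w (m + 1)) (G : Type v) [Group G] (hFC : IsFCw w G)
    (g : Fin (n + m) → G) (y : G) :
    ∃ e : ℕ, 0 < e ∧ Commute (FreeGroup.lift g (commWord m w) ^ e) y := by
  classical
  let S : Set G := insert y (Set.range g)
  have hS : S.Finite := (Set.finite_range g).insert y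
  let H := Subgroup.closure S
  have : Countable S := hS.countable
  have : Countable (FreeGroup S) := by
    unfold FreeGroup
    infer_instance
  have : Countable H := by
    have h : (FreeGroup.lift (Subtype.val : S → G)).range = H := by
      rw [FreeGroup.range_lift_eq_closure, Subtype.range_coe]
    rw [← h]
    exact (MonoidHom.rangeRestrict_surjective _).countable
  have : Finite S := hS
  let Q := H ⧸ Subgroup.center H
  have : Countable Q := Quotient.countable
  have : Small.{u} Q := Countable.toSmall Q
  let φ : H →* Shrink.{u} Q :=
    (Shrink.mulEquiv (α := Q)).symm.toMonoidHom.comp (QuotientGroup.mk' (Subgroup.center H))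
  have hφs : Function.Surjective φ :=
    (Shrink.mulEquiv (α := Q)).symm.surjective.comp (QuotientGroup.mk'_surjective _)
  have hφk : ∀ a : H, φ a = 1 ↔ a ∈ Subgroup.center H := by
    intro a
    simp only [φ, MonoidHom.comp_apply, MulEquiv.toMonoidHom_eq_coe, MonoidHom.coe_coe,
      EmbeddingLike.map_eq_one_iff]
    exact QuotientGroup.eq_one_iff a
  have hcen : ∀ a : H, (∀ s ∈ S, (a : G) * s = s * a) → a ∈ Subgroup.center H := by
    intro a ha
    rw [Subgroup.mem_center_iff]
    intro b
    have : H ≤ Subgroup.centralizer {(a : G)} := by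
      apply (Subgroup.closure_le _).2
      intro s hs
      rw [SetLike.mem_coe, Subgroup.mem_centralizer_singleton_iff]
      exact (ha s hs).symm
    have h2 := this b.2
    rw [Subgroup.mem_centralizer_singleton_iff] at h2
    exact Subtype.ext h2
  let F : H → (S → G) := fun a s => (a : G)⁻¹ * s * a
  have hfac : Function.FactorsThrough φ F := by
    intro a b hab
    have h1 : φ (a * b⁻¹) = 1 := by
      rw [hφk]
      apply hcen
      intro s hs
      have := congrFun hab ⟨s, hs⟩
      simp only [F] at this
      have h3 : s = a * ((b : G)⁻¹ * s * b) * (a : G)⁻¹ := by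
        rw [← this]; group
      push_cast
      conv_rhs => rw [h3]
      group
    rw [map_mul, map_inv] at h1
    exact mul_inv_eq_one.1 h1
  have hFfin : (F '' wValues w H).Finite := by
    refine (Set.Finite.pi' (fun s : S => hFC (s : G))).subset ?_
    rintro _ ⟨_, ⟨k, rfl⟩, rfl⟩ s
    refine ⟨_, ⟨fun i => (k i : G), rfl⟩, ?_⟩
    have := lift_comp_hom w H.subtype k
    simp only [Subgroup.subtype_apply] at this
    simp only [F, this]
  have hWfin : (wValues w (Shrink.{u} Q)).Finite := by
    obtain ⟨h, hh⟩ := (Function.factorsThrough_iff (φ : H → Shrink.{u} Q)).1 hfac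
    refine (hFfin.image h).subset ?_
    rintro _ ⟨k, rfl⟩
    choose k' hk' using fun i => hφs (k i)
    refine ⟨_, ⟨_, ⟨k', rfl⟩, rfl⟩, ?_⟩
    have := lift_comp_hom w φ k'
    have h2 := congrFun hh (FreeGroup.lift k' w)
    simp only [Function.comp] at h2
    rw [← h2, this]
    simp [hk']
  have hfin := hw (Shrink.{u} Q) hWfin
  rw [Nat.add_sub_cancel] at hfin
  let g' : Fin (n + m) → H := fun i => ⟨g i, Subgroup.subset_closure (Or.inr ⟨i, rfl⟩)⟩
  have hmem := commWord_value_mem w (fun i => φ (g' i))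
  rw [← lift_comp_hom] at hmem
  set b := FreeGroup.lift g' (commWord m w) with hb
  have hbG : (b : G) = FreeGroup.lift g (commWord m w) :=
    lift_comp_hom (commWord m w) H.subtype g'
  have : Finite (iterCommSub (Shrink.{u} Q) (verbalSubgroup w (Shrink.{u} Q)) m) := hfin
  obtain ⟨e, he, hpow⟩ := (isOfFinOrder_iff_pow_eq_one).1
    (isOfFinOrder_of_finite (⟨φ b, hmem⟩ :
      iterCommSub (Shrink.{u} Q) (verbalSubgroup w (Shrink.{u} Q)) m))
  refine ⟨e, he, ?_⟩
  have h1 : φ (b ^ e) = 1 := by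
    rw [map_pow]
    exact congrArg Subtype.val hpow
  rw [hφk, Subgroup.mem_center_iff] at h1
  have h2 := h1 ⟨y, Subgroup.subset_closure (Or.inl rfl)⟩
  have h3 := congrArg Subtype.val h2
  rw [← hbG]
  exact h3.symm

theorem star_pow_commute.{u, v} {n m : ℕ} (w : FreeGroup (Fin n))
    (hw : IsFracConcise.{u} w (m + 1)) (G : Type v) [Group G] (hFC : IsFCw w G)
    (b : G) (hb : b ∈ wValuesStar (commWord m w) G) (y : G) :
    ∃ e : ℕ, 0 < e ∧ Commute (b ^ e) y := by
  rcases hb with ⟨g, rfl⟩ | ⟨g, hg⟩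
  · exact value_pow_commute w hw G hFC g y
  · obtain ⟨e, he, h⟩ := value_pow_commute w hw G hFC g y
    refine ⟨e, he, ?_⟩
    have hg' : b = (FreeGroup.lift g (commWord m w))⁻¹ := by
      rw [← inv_inv b]; exact congrArg _ hg.symm
    rw [hg', inv_pow]
    exact h.inv_left

/-- for a `(1/(m+1))`-concise word `w`, an `FC(w)`-group `G` and a finite
subset `B ⊆ G_v^*` (with `v = [w, x_{n+1}, ..., x_{n+m}]`), for any `x ∈ G` there is a
positive integer `e` with `b^e ∈ Z(⟨x, B⟩)` for all `b ∈ B`. -/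
theorem statement_2 {n : ℕ} (m : ℕ) (w : FreeGroup (Fin n))
    (hw : IsFracConcise w (m + 1)) (G : Type*) [Group G] (hFC : IsFCw w G)
    (B : Set G) (hBfin : B.Finite) (hBsub : B ⊆ wValuesStar (commWord m w) G)
    (x : G) :
    ∃ e : ℕ, 0 < e ∧ ∀ b ∈ B,
      b ^ e ∈ Subgroup.closure (insert x B) ⊓
        Subgroup.centralizer ((Subgroup.closure (insert x B) : Subgroup G) : Set G) := by
  classical
  have key := fun (p : G × G) (hp : p.1 ∈ B) =>
    star_pow_commute w hw G hFC p.1 (hBsub hp) p.2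
  choose! E hE hC using key
  let T : Set (G × G) := B ×ˢ insert x B
  have hT : T.Finite := hBfin.prod (hBfin.insert x)
  refine ⟨∏ p ∈ hT.toFinset, E p, ?_, ?_⟩
  · apply Finset.prod_pos
    intro p hp
    exact hE p ((hT.mem_toFinset.1 hp).1)
  · intro b hb
    have hbc : b ∈ Subgroup.closure (insert x B) := Subgroup.subset_closure (Or.inr hb)
    refine Subgroup.mem_inf.2 ⟨pow_mem hbc _, ?_⟩
    rw [Subgroup.centralizer_closure, Subgroup.mem_centralizer_iff]
    intro y hy
    have hmem : (b, y) ∈ hT.toFinset := hT.mem_toFinset.2 ⟨hb, hy⟩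
    obtain ⟨c, hc⟩ := Finset.dvd_prod_of_mem E hmem
    rw [hc, pow_mul]
    exact ((hC (b, y) hb).pow_left c).symm
end

section
/- (Theorem A) Let m ∈ ℕ and let w be a (1/(m+1))-concise group-word. If G is an FC(w)-group, then the iterated commutator subgroup [w(G), G, ..., G] (with G repeated m times) is FC-embedded in G. -/
open scoped Pointwise commutatorElement

universe u v

theorem exists_finite_reps {α β : Type*} {f : α → β} {s : Set α} (h : (f '' s).Finite) :
    ∃ t : Set α, t ⊆ s ∧ t.Finite ∧ f '' t = f '' s := by
  obtain ⟨t, hts, ht⟩ := Set.exists_subset_bijOn s f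
  exact ⟨t, hts, ht.finite_iff_finite.2 h, ht.image_eq⟩

theorem fc_rep {G : Type*} [Group G] {T : Set G} (hn : ∀ t ∈ T, ∀ g : G, g⁻¹ * t * g ∈ T) (x : G)
    (hf : (conjSet x T).Finite) :
    ∃ F : Set G, F.Finite ∧ F ⊆ T ∧ ∀ a ∈ Submonoid.closure T,
      ∃ b ∈ Submonoid.closure F, a⁻¹ * x * a = b⁻¹ * x * b := by
  obtain ⟨F, hFT, hFf, hF⟩ := exists_finite_reps hf
  refine ⟨F, hFf, hFT, fun a ha => ?_⟩
  induction ha using Submonoid.closure_induction_right with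
  | one => exact ⟨1, one_mem _, rfl⟩
  | mul_right a ha t ht ih =>
    obtain ⟨b, hb, hab⟩ := ih
    have h1 : b * t * b⁻¹ ∈ T := by simpa using hn t ht b⁻¹
    have h2 : (b * t * b⁻¹)⁻¹ * x * (b * t * b⁻¹) ∈ conjSet x T := ⟨_, h1, rfl⟩
    have h3 : (b * t * b⁻¹)⁻¹ * x * (b * t * b⁻¹) ∈ (fun g => g⁻¹ * x * g) '' F := by
      rw [hF]; exact h2
    obtain ⟨f, hf, hfe⟩ := h3
    refine ⟨f * b, mul_mem (Submonoid.subset_closure hf) hb, ?_⟩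
    have e1 : (a * t)⁻¹ * x * (a * t) = t⁻¹ * (a⁻¹ * x * a) * t := by group
    have e2 : (f * b)⁻¹ * x * (f * b) = b⁻¹ * (f⁻¹ * x * f) * b := by group
    simp only at hfe
    rw [e1, e2, hab, hfe]
    group

/-- Elements agreeing on generators agree on the closure. -/
theorem conj_agree {G : Type*} [Group G] {E : Set G} {a b : G}
    (h : ∀ e ∈ E, a⁻¹ * e * a = b⁻¹ * e * b) : ∀ y ∈ Subgroup.closure E,
    a⁻¹ * y * a = b⁻¹ * y * b := by
  intro y hy
  induction hy using Subgroup.closure_induction with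
  | mem y hy => exact h y hy
  | one => simp
  | mul y z _ _ h1 h2 =>
    calc a⁻¹ * (y * z) * a = (a⁻¹ * y * a) * (a⁻¹ * z * a) := by group
      _ = (b⁻¹ * y * b) * (b⁻¹ * z * b) := by rw [h1, h2]
      _ = _ := by group
  | inv y _ h1 =>
    calc a⁻¹ * y⁻¹ * a = (a⁻¹ * y * a)⁻¹ := by group
      _ = (b⁻¹ * y * b)⁻¹ := by rw [h1]
      _ = _ := by group

/-- The action of an FC-set on a finite set takes finitely many values. -/
theorem fc_action_finite {G : Type*} [Group G] {T : Set G} (hf : ∀ x, (conjSet x T).Finite)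
    {E : Set G} (hE : E.Finite) :
    ((fun (t : G) (e : E) => t⁻¹ * (e : G) * t) '' T).Finite := by
  have := hE.to_subtype
  refine (Set.Finite.pi (fun e : E => hf (e : G))).subset ?_
  rintro _ ⟨t, ht, rfl⟩ e _
  exact ⟨t, ht, rfl⟩

/-- Commutators inside the subgroup generated by a finite subset `E` of `T`
have finitely many conjugates under that subgroup. -/
theorem comm_conj_finite {G : Type*} [Group G] {T : Set G}
    (hn : ∀ t ∈ T, ∀ g : G, g⁻¹ * t * g ∈ T)
    (hf : ∀ x, (conjSet x T).Finite) {E : Set G} (hE : E.Finite) (hET : E ⊆ T)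
    {a b : G} (ha : a ∈ Subgroup.closure E) (hb : b ∈ Subgroup.closure E) :
    (conjSet (a⁻¹ * b⁻¹ * a * b) (Subgroup.closure E : Set G)).Finite := by
  have := hE.to_subtype
  set X := Subgroup.closure E with hX
  have hA := fc_action_finite hf hE
  set A := ((fun (t : G) (e : E) => t⁻¹ * (e : G) * t) '' T) with hAdef
  let φ : G → (E → (E → G)) := fun g e => fun e' => (g⁻¹ * e * g)⁻¹ * (e' : G) * (g⁻¹ * e * g)
  have hφ : (φ '' (X : Set G)).Finite := by
    refine (Set.Finite.pi (fun _ : E => hA)).subset ?_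
    rintro _ ⟨g, _, rfl⟩ e _
    exact ⟨g⁻¹ * e * g, hn _ (hET e.2) _, rfl⟩
  obtain ⟨R, hRX, hRf, hR⟩ := exists_finite_reps hφ
  refine (hRf.image (fun g => g⁻¹ * (a⁻¹ * b⁻¹ * a * b) * g)).subset ?_
  rintro _ ⟨g, hg, rfl⟩
  have : φ g ∈ φ '' R := by rw [hR]; exact ⟨g, hg, rfl⟩
  obtain ⟨k, hk, hkg⟩ := this
  refine ⟨k, hk, ?_⟩
  have hkX : k ∈ X := hRX hk
  have hgX : g ∈ X := hg
  have key : ∀ y ∈ X, ∀ c ∈ X,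
      (k⁻¹ * y * k)⁻¹ * c * (k⁻¹ * y * k) = (g⁻¹ * y * g)⁻¹ * c * (g⁻¹ * y * g) := by
    intro y hy
    rw [hX] at hy
    induction hy using Subgroup.closure_induction with
    | mem y hy =>
      apply conj_agree
      intro e he
      exact congrFun (congrFun hkg ⟨y, hy⟩) ⟨e, he⟩
    | one => intro c _; simp
    | mul y z hy hz h1 h2 =>
      intro c hc
      have hm : (g⁻¹ * y * g)⁻¹ * c * (g⁻¹ * y * g) ∈ X := by
        have : g⁻¹ * y * g ∈ X := mul_mem (mul_mem (inv_mem hgX) hy) hgX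
        exact mul_mem (mul_mem (inv_mem this) hc) this
      calc _ = (k⁻¹ * z * k)⁻¹ * ((k⁻¹ * y * k)⁻¹ * c * (k⁻¹ * y * k)) * (k⁻¹ * z * k) := by group
        _ = (g⁻¹ * z * g)⁻¹ * ((g⁻¹ * y * g)⁻¹ * c * (g⁻¹ * y * g)) * (g⁻¹ * z * g) := by
          rw [h1 c hc, h2 _ hm]
        _ = _ := by group
    | inv y hy h1 =>
      intro c hc
      have hm : (g⁻¹ * y * g) * c * (g⁻¹ * y * g)⁻¹ ∈ X := by
        have : g⁻¹ * y * g ∈ X := mul_mem (mul_mem (inv_mem hgX) hy) hgX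
        exact mul_mem (mul_mem this hc) (inv_mem this)
      have h2 := h1 _ hm
      have h3 : (g⁻¹ * y * g)⁻¹ * ((g⁻¹ * y * g) * c * (g⁻¹ * y * g)⁻¹) * (g⁻¹ * y * g) = c := by
        group
      rw [h3] at h2
      have e1 : k⁻¹ * y⁻¹ * k = (k⁻¹ * y * k)⁻¹ := by group
      have e2 : g⁻¹ * y⁻¹ * g = (g⁻¹ * y * g)⁻¹ := by group
      rw [e1, e2, inv_inv, inv_inv]
      conv_lhs => rw [← h2]
      group
  have hα' : g⁻¹ * a * g ∈ X := mul_mem (mul_mem (inv_mem hgX) ha) hgX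
  have hβ : k⁻¹ * b * k ∈ X := mul_mem (mul_mem (inv_mem hkX) hb) hkX
  have h1 := key a ha _ hβ
  have h2 := key b hb _ hα'
  simp only
  calc k⁻¹ * (a⁻¹ * b⁻¹ * a * b) * k
      = ((k⁻¹ * a * k)⁻¹ * (k⁻¹ * b * k) * (k⁻¹ * a * k))⁻¹ * (k⁻¹ * b * k) := by group
    _ = ((g⁻¹ * a * g)⁻¹ * (k⁻¹ * b * k) * (g⁻¹ * a * g))⁻¹ * (k⁻¹ * b * k) := by rw [h1]
    _ = (g⁻¹ * a * g)⁻¹ * ((k⁻¹ * b * k)⁻¹ * (g⁻¹ * a * g) * (k⁻¹ * b * k)) := by group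
    _ = (g⁻¹ * a * g)⁻¹ * ((g⁻¹ * b * g)⁻¹ * (g⁻¹ * a * g) * (g⁻¹ * b * g)) := by rw [h2]
    _ = _ := by group

theorem closure_finite_support {G : Type*} [Group G] {T : Set G} {a : G}
    (ha : a ∈ Subgroup.closure T) :
    ∃ E : Set G, E.Finite ∧ E ⊆ T ∧ a ∈ Subgroup.closure E := by
  induction ha using Subgroup.closure_induction with
  | mem y hy => exact ⟨{y}, Set.finite_singleton y, by simpa using hy,
      Subgroup.subset_closure rfl⟩
  | one => exact ⟨∅, Set.finite_empty, Set.empty_subset _, one_mem _⟩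
  | mul y z _ _ h1 h2 =>
    obtain ⟨F, k1, k2, k3⟩ := h2
    obtain ⟨E, h1, h2, h3⟩ := h1
    exact ⟨E ∪ F, h1.union k1, Set.union_subset h2 k2,
      mul_mem (Subgroup.closure_mono Set.subset_union_left h3)
        (Subgroup.closure_mono Set.subset_union_right k3)⟩
  | inv y _ h1 =>
    obtain ⟨E, h1, h2, h3⟩ := h1
    exact ⟨E, h1, h2, inv_mem h3⟩

theorem comm_inv_finite {G : Type*} [Group G] {T : Set G}
    (hn : ∀ t ∈ T, ∀ g : G, g⁻¹ * t * g ∈ T)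
    (hf : ∀ x, (conjSet x T).Finite)
    {a b : G} (ha : a ∈ Subgroup.closure T) (hb : b ∈ Subgroup.closure T) :
    (conjSet (a⁻¹ * b⁻¹ * a * b) T⁻¹).Finite := by
  set h := a⁻¹ * b⁻¹ * a * b with hh
  obtain ⟨F, hFf, hFT, hF⟩ := fc_rep hn h (hf h)
  obtain ⟨E1, f1, s1, m1⟩ := closure_finite_support ha
  obtain ⟨E2, f2, s2, m2⟩ := closure_finite_support hb
  have hfin := comm_conj_finite hn hf (E := F ∪ (E1 ∪ E2)) (hFf.union (f1.union f2))
    (Set.union_subset hFT (Set.union_subset s1 s2))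
    (Subgroup.closure_mono (by intro z; simp; tauto) m1)
    (Subgroup.closure_mono (by intro z; simp; tauto) m2)
  have hM : (conjSet h (Submonoid.closure T : Set G)).Finite := by
    refine hfin.subset ?_
    rintro _ ⟨c, hc, rfl⟩
    obtain ⟨d, hd, hcd⟩ := hF c hc
    refine ⟨d, ?_, hcd.symm⟩
    have : Submonoid.closure F ≤ (Subgroup.closure (F ∪ (E1 ∪ E2))).toSubmonoid :=
      Submonoid.closure_le.2 (fun z hz => Subgroup.subset_closure (Or.inl hz))
    exact this hd
  refine hM.subset ?_
  rintro _ ⟨t, ht, rfl⟩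
  have ht' : t⁻¹ ∈ T := ht
  have hmaps : Set.MapsTo (fun y => t * y * t⁻¹) (conjSet h (Submonoid.closure T : Set G))
      (conjSet h (Submonoid.closure T : Set G)) := by
    rintro _ ⟨c, hc, rfl⟩
    refine ⟨c * t⁻¹, mul_mem hc (Submonoid.subset_closure ht'), ?_⟩
    simp only
    group
  have hinj : Set.InjOn (fun y => t * y * t⁻¹) (conjSet h (Submonoid.closure T : Set G)) := by
    intro y _ z _ hyz
    simpa using hyz
  have hsurj := ((hM.injOn_iff_bijOn_of_mapsTo hmaps).1 hinj).surjOn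
  have hmem : h ∈ conjSet h (Submonoid.closure T : Set G) := ⟨1, one_mem _, by simp⟩
  obtain ⟨y, hy, hye⟩ := hsurj hmem
  have : t⁻¹ * h * t = y := by
    rw [← hye]; simp only; group
  simp only
  rw [this]; exact hy

theorem fc_inv_step {G : Type*} [Group G] {T : Set G}
    (hf : ∀ x, (conjSet x T).Finite) (x : G)
    (h : ∀ t ∈ T, (conjSet (x⁻¹ * t⁻¹ * x * t) T⁻¹).Finite) : (conjSet x T⁻¹).Finite := by
  have : (⋃ y ∈ conjSet x T, (fun z => x * z⁻¹) '' conjSet (x⁻¹ * y) T⁻¹).Finite := by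
    refine (hf x).biUnion ?_
    rintro _ ⟨t, ht, rfl⟩
    refine Set.Finite.image _ ?_
    have := h t ht
    simpa [mul_assoc] using this
  refine this.subset ?_
  rintro _ ⟨t, ht, rfl⟩
  refine Set.mem_biUnion (x := t * x * t⁻¹) ⟨t⁻¹, ht, by simp⟩ ?_
  refine ⟨t⁻¹ * (x⁻¹ * (t * x * t⁻¹)) * t, ⟨t, ht, rfl⟩, ?_⟩
  simp only
  group

theorem fc_inv {G : Type*} [Group G] {T : Set G}
    (hn : ∀ t ∈ T, ∀ g : G, g⁻¹ * t * g ∈ T)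
    (hf : ∀ x, (conjSet x T).Finite) (x : G) : (conjSet x T⁻¹).Finite := by
  apply fc_inv_step hf
  intro t ht
  apply fc_inv_step hf
  intro s hs
  apply comm_inv_finite hn hf _ (Subgroup.subset_closure hs)
  have h1 : x⁻¹ * t⁻¹ * x * t = (x⁻¹ * t * x)⁻¹ * t := by group
  rw [h1]
  exact mul_mem (inv_mem (Subgroup.subset_closure (hn t ht x))) (Subgroup.subset_closure ht)

theorem fc_mul {G : Type*} [Group G] {A B : Set G} (hA : ∀ x, (conjSet x A).Finite)
    (hB : ∀ x, (conjSet x B).Finite) (x : G) : (conjSet x (A * B)).Finite := by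
  refine ((hA x).biUnion (t := fun y => conjSet y B) (fun y _ => hB y)).subset ?_
  rintro _ ⟨_, ⟨a, ha, b, hb, rfl⟩, rfl⟩
  refine Set.mem_biUnion (x := a⁻¹ * x * a) ⟨a, ha, rfl⟩ ⟨b, hb, ?_⟩
  simp only
  group

/-- Iterated commutator sets. -/
def iterCommSet {G : Type*} [Group G] (T : Set G) : ℕ → Set G
  | 0 => T
  | k + 1 => {z | ∃ s ∈ iterCommSet T k, ∃ y : G, z = ⁅s, y⁆}

theorem iterCommSet_normal {G : Type*} [Group G] {T : Set G}
    (hn : ∀ t ∈ T, ∀ g : G, g⁻¹ * t * g ∈ T) (k : ℕ) :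
    ∀ t ∈ iterCommSet T k, ∀ g : G, g⁻¹ * t * g ∈ iterCommSet T k := by
  induction k with
  | zero => exact hn
  | succ k ih =>
    rintro _ ⟨s, hs, y, rfl⟩ g
    refine ⟨_, ih s hs g, g⁻¹ * y * g, ?_⟩
    simp only [commutatorElement_def]
    group

theorem iterCommSet_fc {G : Type*} [Group G] {T : Set G}
    (hn : ∀ t ∈ T, ∀ g : G, g⁻¹ * t * g ∈ T) (hf : ∀ x, (conjSet x T).Finite) (k : ℕ) :
    ∀ x, (conjSet x (iterCommSet T k)).Finite := by
  induction k with
  | zero => exact hf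
  | succ k ih =>
    intro x
    refine (fc_mul ih (fc_inv (iterCommSet_normal hn k) ih) x).subset ?_
    rintro _ ⟨_, ⟨s, hs, y, rfl⟩, rfl⟩
    refine ⟨_, ⟨s, hs, y * s⁻¹ * y⁻¹, ?_, ?_⟩, rfl⟩
    · have := iterCommSet_normal hn k s hs y⁻¹
      simpa [mul_assoc] using this
    · simp [commutatorElement_def, mul_assoc]

theorem closure_conj_mem {G : Type*} [Group G] {T : Set G}
    (hn : ∀ t ∈ T, ∀ g : G, g⁻¹ * t * g ∈ T) {a : G} (ha : a ∈ Subgroup.closure T) (g : G) :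
    g⁻¹ * a * g ∈ Subgroup.closure T := by
  induction ha using Subgroup.closure_induction with
  | mem y hy => exact Subgroup.subset_closure (hn y hy g)
  | one => simp
  | mul y z _ _ h1 h2 =>
    have : g⁻¹ * (y * z) * g = (g⁻¹ * y * g) * (g⁻¹ * z * g) := by group
    rw [this]; exact mul_mem h1 h2
  | inv y _ h1 =>
    have : g⁻¹ * y⁻¹ * g = (g⁻¹ * y * g)⁻¹ := by group
    rw [this]; exact inv_mem h1

theorem iterCommSub_le {G : Type*} [Group G] {T : Set G}
    (hn : ∀ t ∈ T, ∀ g : G, g⁻¹ * t * g ∈ T) (k : ℕ) :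
    iterCommSub G (Subgroup.closure T) k ≤ Subgroup.closure (iterCommSet T k) := by
  induction k with
  | zero => exact le_rfl
  | succ k ih =>
    refine Subgroup.commutator_le.2 ?_
    intro g hg y _
    have hg' := ih hg
    have hN := iterCommSet_normal hn (k + 1)
    clear hg
    induction hg' using Subgroup.closure_induction with
    | mem s hs => exact Subgroup.subset_closure ⟨s, hs, y, rfl⟩
    | one => simp
    | mul a b _ _ h1 h2 =>
      have : ⁅a * b, y⁆ = (a⁻¹⁻¹ * ⁅b, y⁆ * a⁻¹) * ⁅a, y⁆ := by
        simp only [commutatorElement_def]; group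
      rw [this]
      exact mul_mem (closure_conj_mem hN h2 _) h1
    | inv a _ h1 =>
      have : ⁅a⁻¹, y⁆ = a⁻¹ * ⁅a, y⁆⁻¹ * a := by
        simp only [commutatorElement_def]; group
      rw [this]
      exact closure_conj_mem hN (inv_mem h1) _

theorem wValues_normal {n : ℕ} (w : FreeGroup (Fin n)) (G : Type*) [Group G] :
    ∀ t ∈ wValues w G, ∀ g : G, g⁻¹ * t * g ∈ wValues w G := by
  rintro _ ⟨v, rfl⟩ g
  refine ⟨fun i => g⁻¹ * v i * g, ?_⟩
  have : FreeGroup.lift (fun i => g⁻¹ * v i * g)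
      = (MulAut.conj g⁻¹).toMonoidHom.comp (FreeGroup.lift v) := by
    ext i; simp
  simp [this]

theorem wValues_map {n : ℕ} (w : FreeGroup (Fin n)) {G H : Type*} [Group G] [Group H]
    (f : G →* H) (v : Fin n → G) :
    f (FreeGroup.lift v w) = FreeGroup.lift (fun i => f (v i)) w := by
  have : f.comp (FreeGroup.lift v) = FreeGroup.lift (fun i => f (v i)) := by
    ext i; simp
  rw [← this]; rfl

theorem iterCommSub_map_le {n : ℕ} (w : FreeGroup (Fin n)) {G H : Type*} [Group G] [Group H]
    (f : G →* H) (k : ℕ) :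
    (iterCommSub G (verbalSubgroup w G) k).map f ≤ iterCommSub H (verbalSubgroup w H) k := by
  induction k with
  | zero =>
    show (Subgroup.closure _).map f ≤ Subgroup.closure _
    rw [MonoidHom.map_closure]
    apply Subgroup.closure_mono
    rintro _ ⟨_, ⟨v, rfl⟩, rfl⟩
    exact ⟨_, (wValues_map w f v).symm⟩
  | succ k ih =>
    show (⁅_, _⁆ : Subgroup G).map f ≤ ⁅_, _⁆
    rw [Subgroup.map_commutator]
    exact Subgroup.commutator_mono ih le_top

theorem iterCommSub_mono {n : ℕ} (w : FreeGroup (Fin n)) {G : Type*} [Group G]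
    {X Y : Subgroup G} (h : X ≤ Y) (k : ℕ) :
    (iterCommSub X (verbalSubgroup w X) k).map X.subtype ≤
      (iterCommSub Y (verbalSubgroup w Y) k).map Y.subtype := by
  have := Subgroup.map_mono (f := Y.subtype) (iterCommSub_map_le w (Subgroup.inclusion h) k)
  rwa [Subgroup.map_map, Subgroup.subtype_comp_inclusion] at this

theorem closure_local {G : Type*} [Group G] (P : Set G → Subgroup G)
    (hP : ∀ E F : Set G, E ⊆ F → P E ≤ P F) {S : Set G}
    (hS : ∀ s ∈ S, ∃ E : Set G, E.Finite ∧ s ∈ P E) {a : G} (ha : a ∈ Subgroup.closure S) :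
    ∃ E : Set G, E.Finite ∧ a ∈ P E := by
  induction ha using Subgroup.closure_induction with
  | mem y hy => exact hS y hy
  | one => exact ⟨∅, Set.finite_empty, one_mem _⟩
  | mul y z _ _ h1 h2 =>
    obtain ⟨E, h1, h3⟩ := h1
    obtain ⟨F, k1, k3⟩ := h2
    exact ⟨E ∪ F, h1.union k1,
      mul_mem (hP _ _ Set.subset_union_left h3)
        (hP _ _ Set.subset_union_right k3)⟩
  | inv y _ h1 =>
    obtain ⟨E, h1, h3⟩ := h1
    exact ⟨E, h1, inv_mem h3⟩

theorem iterCommSub_local {n : ℕ} (w : FreeGroup (Fin n)) {G : Type*} [Group G] (k : ℕ) :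
    ∀ a ∈ iterCommSet (wValues w G) k, ∃ E : Set G, E.Finite ∧
      a ∈ (iterCommSub (Subgroup.closure E) (verbalSubgroup w (Subgroup.closure E)) k).map
        (Subgroup.closure E).subtype := by
  induction k with
  | zero =>
    rintro _ ⟨v, rfl⟩
    refine ⟨Set.range v, Set.finite_range v, ?_⟩
    refine ⟨FreeGroup.lift (fun i => (⟨v i, Subgroup.subset_closure ⟨i, rfl⟩⟩ :
      Subgroup.closure (Set.range v))) w, Subgroup.subset_closure ⟨_, rfl⟩, ?_⟩
    exact wValues_map w (Subgroup.closure (Set.range v)).subtype _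
  | succ k ih =>
    rintro _ ⟨s, hs, y, rfl⟩
    obtain ⟨E, hE, hsE⟩ := ih s hs
    refine ⟨E ∪ {y}, hE.union (Set.finite_singleton y), ?_⟩
    obtain ⟨s', hs', rfl⟩ := iterCommSub_mono w
      (Subgroup.closure_mono (Set.subset_union_left (s := E) (t := {y}))) k hsE
    refine ⟨⁅s', ⟨y, Subgroup.subset_closure (Or.inr rfl)⟩⁆,
      Subgroup.commutator_mem_commutator hs' (Subgroup.mem_top _), ?_⟩
    rw [map_commutatorElement]
    rfl

theorem closure_countable' {G : Type*} [Group G] {E : Set G} (hE : E.Finite) :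
    Countable (Subgroup.closure E) := by
  have := hE.to_subtype
  have h : (FreeGroup.lift (Subtype.val : E → G)).range = Subgroup.closure E := by
    rw [FreeGroup.range_lift_eq_closure]; simp
  rw [← h]
  have hc : Countable (FreeGroup E) := by
    unfold FreeGroup
    infer_instance
  exact (MonoidHom.rangeRestrict_surjective _).countable

/-- Universe transfer of conciseness to countable groups. -/
theorem concise_countable {n : ℕ} (m : ℕ) (w : FreeGroup (Fin n))
    (hw : IsFracConcise.{u} w (m + 1)) (Q : Type v) [Group Q] [Countable Q]
    (hQ : (wValues w Q).Finite) :
    ((iterCommSub Q (verbalSubgroup w Q) m : Subgroup Q) : Set Q).Finite := by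
  have h : Small.{u} Q := inferInstance
  let e : Shrink.{u} Q ≃* Q := Shrink.mulEquiv
  have h1 : (wValues w (Shrink.{u} Q)).Finite := by
    refine (hQ.preimage (f := e) e.injective.injOn).subset ?_
    rintro _ ⟨v, rfl⟩
    exact ⟨_, (wValues_map w e.toMonoidHom v).symm⟩
  have h2 := hw (Shrink.{u} Q) h1
  refine (h2.preimage (f := e.symm) e.symm.injective.injOn).subset ?_
  intro q hq
  exact iterCommSub_map_le w e.symm.toMonoidHom m ⟨q, hq, rfl⟩

theorem local_finite {n : ℕ} (m : ℕ) (w : FreeGroup (Fin n))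
    (hw : IsFracConcise.{u} w (m + 1)) {G : Type v} [Group G] (hFC : IsFCw w G)
    {E : Set G} (hE : E.Finite) (x : G) (hx : x ∈ Subgroup.closure E) :
    (conjSet x (((iterCommSub (Subgroup.closure E) (verbalSubgroup w (Subgroup.closure E)) m).map
        (Subgroup.closure E).subtype : Subgroup G) : Set G)).Finite := by
  have hcount := closure_countable' hE
  have hA := fc_action_finite hFC hE
  set X := Subgroup.closure E with hX
  let Z := Subgroup.center X
  let π := QuotientGroup.mk' Z
  have hcQ : Countable (X ⧸ Z) := (QuotientGroup.mk'_surjective Z).countable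
  have hker : ∀ a b : X, π a = π b ↔ ∀ c : X, a⁻¹ * c * a = b⁻¹ * c * b := by
    intro a b
    rw [← inv_inj, ← map_inv, ← map_inv]
    show ((a⁻¹ : X) : X ⧸ Z) = (b⁻¹ : X) ↔ _
    rw [QuotientGroup.eq, Subgroup.mem_center_iff]
    refine forall_congr' fun c => ?_
    rw [inv_inv]
    constructor
    · intro h
      calc a⁻¹ * c * a = a⁻¹ * (c * (a * b⁻¹)) * b := by group
        _ = a⁻¹ * (a * b⁻¹ * c) * b := by rw [h]
        _ = _ := by group
    · intro h
      calc c * (a * b⁻¹) = a * (a⁻¹ * c * a) * b⁻¹ := by group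
        _ = a * (b⁻¹ * c * b) * b⁻¹ := by rw [h]
        _ = _ := by group
  have hwQ : (wValues w (X ⧸ Z)).Finite := by
    let φ : X → (E → G) := fun t e => (t : G)⁻¹ * (e : G) * t
    have hφ : (φ '' wValues w X).Finite := by
      refine hA.subset ?_
      rintro _ ⟨_, ⟨v, rfl⟩, rfl⟩
      exact ⟨_, ⟨_, (wValues_map w X.subtype v).symm⟩, rfl⟩
    obtain ⟨R, hRX, hRf, hR⟩ := exists_finite_reps hφ
    refine (hRf.image π).subset ?_
    rintro _ ⟨v, rfl⟩
    obtain ⟨v', hv'⟩ : ∃ v' : Fin n → X, ∀ i, π (v' i) = v i :=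
      ⟨fun i => (QuotientGroup.mk'_surjective Z (v i)).choose,
        fun i => (QuotientGroup.mk'_surjective Z (v i)).choose_spec⟩
    obtain ⟨r, hr, hre⟩ : φ (FreeGroup.lift v' w) ∈ φ '' R := by
      rw [hR]; exact ⟨_, ⟨v', rfl⟩, rfl⟩
    refine ⟨r, hr, ?_⟩
    have h1 : π (FreeGroup.lift v' w) = FreeGroup.lift v w := by
      rw [wValues_map w π v']; simp only [hv']
    simp only
    rw [← h1, hker]
    intro c
    apply Subtype.ext
    exact conj_agree (fun e he => congrFun hre ⟨e, he⟩) c c.2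
  have hfin := concise_countable m w hw (X ⧸ Z) hwQ
  have h2 : (π '' (iterCommSub X (verbalSubgroup w X) m : Set X)).Finite := by
    refine hfin.subset ?_
    rintro _ ⟨a, ha, rfl⟩
    exact iterCommSub_map_le w π m ⟨a, ha, rfl⟩
  obtain ⟨R, hRX, hRf, hR⟩ := exists_finite_reps h2
  refine (hRf.image (fun r : X => (r : G)⁻¹ * x * r)).subset ?_
  rintro _ ⟨_, ⟨a, ha, rfl⟩, rfl⟩
  obtain ⟨r, hr, hre⟩ : π a ∈ π '' R := by rw [hR]; exact ⟨a, ha, rfl⟩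
  refine ⟨r, hr, ?_⟩
  exact congrArg Subtype.val ((hker r a).1 hre ⟨x, hx⟩)

/-- Theorem A: if `w` is `(1/(m+1))`-concise and `G` is an `FC(w)`-group,
then `[w(G), G, ..., G]` (`G` repeated `m` times) is `FC`-embedded in `G`. -/
theorem statement_3 {n : ℕ} (m : ℕ) (w : FreeGroup (Fin n))
    (hw : IsFracConcise w (m + 1)) (G : Type*) [Group G] (hFC : IsFCw w G) :
    IsFCEmbedded (iterCommSub G (verbalSubgroup w G) m) := by
  intro x
  have hn := wValues_normal w G
  set S := iterCommSet (wValues w G) m with hS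
  have hSn := iterCommSet_normal hn m
  have hSf := iterCommSet_fc hn hFC m
  have hSf' := fc_inv hSn hSf
  have hUn : ∀ t ∈ S ∪ S⁻¹, ∀ g : G, g⁻¹ * t * g ∈ S ∪ S⁻¹ := by
    rintro t (ht | ht) g
    · exact Or.inl (hSn t ht g)
    · right
      have := hSn _ ht g
      rw [Set.mem_inv]
      simpa [mul_assoc] using this
  have hUf : (conjSet x (S ∪ S⁻¹)).Finite := by
    unfold conjSet
    rw [Set.image_union]
    exact (hSf x).union (hSf' x)
  obtain ⟨F, hFf, hFU, hF⟩ := fc_rep hUn x hUf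
  obtain ⟨P, hPdef⟩ : ∃ P : Set G → Subgroup G, P = fun E =>
    (iterCommSub (Subgroup.closure E) (verbalSubgroup w (Subgroup.closure E)) m).map
        (Subgroup.closure E).subtype := ⟨_, rfl⟩
  have hP : ∀ E F : Set G, E ⊆ F → P E ≤ P F := by
    rw [hPdef]
    exact fun E F h => iterCommSub_mono w (Subgroup.closure_mono h) m
  have hloc : ∀ f ∈ F, ∃ E : Set G, E.Finite ∧ f ∈ P E := by
    intro f hf
    rw [hPdef]
    rcases hFU hf with h | h
    · exact iterCommSub_local w m f h
    · obtain ⟨E, hE, hfE⟩ := iterCommSub_local w m f⁻¹ h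
      exact ⟨E, hE, inv_mem_iff.1 hfE⟩
  choose! E hEf hEm using hloc
  let E' : Set G := (⋃ f ∈ F, E f) ∪ {x}
  have hE' : E'.Finite := (hFf.biUnion hEf).union (Set.finite_singleton x)
  have hfin : (conjSet x (P E' : Set G)).Finite := by
    rw [hPdef]
    exact local_finite m w hw hFC hE' x (Subgroup.subset_closure (Or.inr rfl))
  refine hfin.subset ?_
  rintro _ ⟨h, hh, rfl⟩
  have h1 : h ∈ Subgroup.closure S := iterCommSub_le hn m hh
  have h2 : h ∈ Submonoid.closure (S ∪ S⁻¹) := by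
    rw [← Subgroup.closure_toSubmonoid]; exact h1
  obtain ⟨b, hb, hab⟩ := hF h h2
  refine ⟨b, ?_, hab.symm⟩
  have : Submonoid.closure F ≤ (P E').toSubmonoid := by
    refine Submonoid.closure_le.2 fun f hf => ?_
    have hsub : E f ⊆ E' :=
      (Set.subset_biUnion_of_mem (u := E) hf).trans Set.subset_union_left
    exact hP (E f) E' hsub (hEm f hf)
  exact this hb
end

section
/- Let w be a group-word in n variables and let v = [w(x_1,...,x_n), x_{n+1}, ..., x_{n+m}]. There exists a function f : ℕ → ℕ (depending only on w and m) such that: if G is a BFC(w)-group with |x^{G_w}| ≤ r for all x ∈ G, then G is a BFC(v)-group and |x^{G_v}| ≤ f(r) for all x ∈ G. -/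
namespace BFCAux

open scoped Pointwise

/-- `A` has at most `k` elements. -/
def Bd {α : Type*} (A : Set α) (k : ℕ) : Prop := ∃ F : Finset α, A ⊆ F ∧ F.card ≤ k

theorem bd_iff {α : Type*} (A : Set α) (k : ℕ) : Bd A k ↔ A.Finite ∧ A.ncard ≤ k := by
  constructor
  · rintro ⟨F, hF, hk⟩
    refine ⟨F.finite_toSet.subset hF, ?_⟩
    have := Set.ncard_le_ncard hF F.finite_toSet
    rw [Set.ncard_coe_finset] at this
    omega
  · rintro ⟨h, hk⟩
    refine ⟨h.toFinset, by simp, ?_⟩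
    rw [Set.ncard_eq_toFinset_card _ h] at hk
    exact hk

theorem Bd.mono {α : Type*} {A B : Set α} {k : ℕ} (h : Bd B k) (hs : A ⊆ B) : Bd A k := by
  obtain ⟨F, hF, hk⟩ := h
  exact ⟨F, hs.trans hF, hk⟩

theorem Bd.image {α β : Type*} {A : Set α} {k : ℕ} (h : Bd A k) (f : α → β) :
    Bd (f '' A) k := by
  classical
  obtain ⟨F, hF, hk⟩ := h
  refine ⟨F.image f, ?_, Finset.card_image_le.trans hk⟩
  rw [Finset.coe_image]
  exact Set.image_mono hF

theorem Bd.cover {α β : Type*} {A : Set α} {C : Set β} {k l : ℕ} (hA : Bd A k)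
    (B : α → Set β) (hB : ∀ a ∈ A, Bd (B a) l) (hC : ∀ c ∈ C, ∃ a ∈ A, c ∈ B a) :
    Bd C (k * l) := by
  classical
  obtain ⟨F, hF, hk⟩ := hA
  have h : ∀ a, ∃ E : Finset β, (a ∈ A → B a ⊆ E) ∧ E.card ≤ l := by
    intro a
    by_cases ha : a ∈ A
    · obtain ⟨E, h1, h2⟩ := hB a ha
      exact ⟨E, fun _ => h1, h2⟩
    · exact ⟨∅, fun h => absurd h ha, by simp⟩
  choose E h1 h2 using h
  refine ⟨F.biUnion E, ?_, ?_⟩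
  · intro c hc
    obtain ⟨a, ha, hca⟩ := hC c hc
    simp only [Finset.coe_biUnion, Set.mem_iUnion]
    exact ⟨a, hF ha, h1 a ha hca⟩
  · exact (Finset.card_biUnion_le_card_mul F E l (fun a _ => h2 a)).trans
      (Nat.mul_le_mul_right _ hk)

variable {G : Type*} [Group G]

/-- The conjugacy class of `a`. -/
def cls (a : G) : Set G := Set.range fun g : G => g * a * g⁻¹

theorem cls_bd_of_index (a : G) (k : ℕ) (hf : (Subgroup.centralizer {a}).FiniteIndex)
    (hk : (Subgroup.centralizer {a}).index ≤ k) : Bd (cls a) k := by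
  classical
  have : Fintype (G ⧸ Subgroup.centralizer {a}) := Fintype.ofFinite _
  refine ⟨Finset.univ.image
    (fun q : G ⧸ Subgroup.centralizer {a} => q.out * a * q.out⁻¹), ?_, ?_⟩
  · rintro _ ⟨g, rfl⟩
    simp only [Finset.coe_image, Finset.coe_univ, Set.image_univ, Set.mem_range]
    refine ⟨(g : G ⧸ Subgroup.centralizer {a}), ?_⟩
    obtain ⟨h, hh⟩ := QuotientGroup.mk_out_eq_mul (Subgroup.centralizer {a}) g
    rw [hh]
    have hc := Subgroup.mem_centralizer_singleton_iff.1 h.2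
    calc g * h * a * (g * h)⁻¹ = g * (h * a) * (h : G)⁻¹ * g⁻¹ := by group
      _ = g * (a * h) * (h : G)⁻¹ * g⁻¹ := by rw [hc]
      _ = _ := by group
  · refine Finset.card_image_le.trans ?_
    rw [Finset.card_univ, ← Nat.card_eq_fintype_card]
    exact hk

theorem cls_mul_bd {a b : G} {k l : ℕ} (ha : Bd (cls a) k) (hb : Bd (cls b) l) :
    Bd (cls (a * b)) (k * l) := by
  refine ha.cover (fun u => (fun v => u * v) '' cls b) (fun u _ => hb.image _) ?_
  rintro _ ⟨g, rfl⟩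
  refine ⟨_, ⟨g, rfl⟩, _, ⟨g, rfl⟩, ?_⟩
  simp only
  group

theorem cls_conj {a : G} {k : ℕ} (ha : Bd (cls a) k) (y : G) : Bd (cls (y * a * y⁻¹)) k := by
  refine ha.mono ?_
  rintro _ ⟨g, rfl⟩
  exact ⟨g * y, by simp only; group⟩

theorem cls_inv {a : G} {k : ℕ} (ha : Bd (cls a) k) : Bd (cls a⁻¹) k := by
  refine (ha.image (fun u => u⁻¹)).mono ?_
  rintro _ ⟨g, rfl⟩
  exact ⟨_, ⟨g, rfl⟩, by simp only; group⟩

theorem exists_reps {S : Set G} {r : ℕ} (hS : ∀ x : G, Bd (conjSet x S) r) :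
    ∃ T : Finset G, T.card ≤ r ∧
      ∀ g ∈ S, ∃ s ∈ T, Bd (cls (g * s⁻¹)) (r * r + r + 1) := by
  classical
  by_contra! hcon
  have key : ∀ k ≤ r + 1, ∃ T : Finset G, T.card = k ∧ (T : Set G) ⊆ S ∧
      ∀ g ∈ T, ∀ s ∈ T, g ≠ s → ¬ Bd (cls (g * s⁻¹)) (r * r + r + 1) := by
    intro k
    induction k with
    | zero => intro _; exact ⟨∅, by simp⟩
    | succ k ih =>
      intro hk
      obtain ⟨T, h1, h2, h3⟩ := ih (by omega)
      obtain ⟨g, hg, hgT⟩ := hcon T (by omega)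
      have hnot : g ∉ T := by
        intro h
        apply hgT g h
        refine ⟨{1}, ?_, by simp⟩
        rintro _ ⟨u, rfl⟩
        simp
      refine ⟨insert g T, by rw [Finset.card_insert_of_notMem hnot, h1], ?_, ?_⟩
      · rw [Finset.coe_insert]
        exact Set.insert_subset hg h2
      · intro a ha b hb hab
        rcases Finset.mem_insert.1 ha with rfl | ha'
        · rcases Finset.mem_insert.1 hb with rfl | hb
          · exact absurd rfl hab
          · exact hgT b hb
        · rcases Finset.mem_insert.1 hb with rfl | hb
          · intro h
            apply hgT a ha'
            have := cls_inv h
            simpa using this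
          · exact h3 a ha' b hb hab
  obtain ⟨T, h1, h2, h3⟩ := key (r + 1) le_rfl
  have hcov : (⋃ p ∈ T.offDiag, (1 : G) •
      ((Subgroup.centralizer {p.1 * p.2⁻¹} : Subgroup G) : Set G)) = Set.univ := by
    apply Set.eq_univ_of_forall
    intro x
    obtain ⟨F, hF, hFr⟩ := hS x
    obtain ⟨a, ha, b, hb, hab, he⟩ := Finset.exists_ne_map_eq_of_card_lt_of_maps_to
      (s := T) (t := F) (f := fun g => g⁻¹ * x * g) (by omega)
      (fun g hg => hF ⟨g, h2 hg, rfl⟩)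
    simp only [Set.mem_iUnion, one_smul]
    refine ⟨(a, b), by simp [ha, hb, hab], ?_⟩
    rw [SetLike.mem_coe, Subgroup.mem_centralizer_singleton_iff]
    simp only at he ⊢
    calc x * (a * b⁻¹) = a * (a⁻¹ * x * a) * b⁻¹ := by group
      _ = a * (b⁻¹ * x * b) * b⁻¹ := by rw [he]
      _ = _ := by group
  obtain ⟨p, hp, hfi, hle⟩ := Subgroup.exists_index_le_card_of_leftCoset_cover hcov
  rw [Finset.mem_offDiag] at hp
  refine h3 p.1 hp.1 p.2 hp.2.1 hp.2.2 (cls_bd_of_index _ _ hfi (hle.trans ?_))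
  rw [Finset.offDiag_card, h1]
  have : (r + 1) * (r + 1) = r * r + r + (r + 1) := by ring
  omega

theorem inv_bd {S : Set G} {r : ℕ} (hS : ∀ x : G, Bd (conjSet x S) r) (x : G) :
    Bd (conjSet x S⁻¹) (r * (r * ((r * r + r + 1) * (r * r + r + 1)))) := by
  obtain ⟨T, hT, hrep⟩ := exists_reps hS
  set K := r * r + r + 1
  have hTb : Bd (T : Set G) r := ⟨T, subset_rfl, hT⟩
  refine hTb.cover (fun s => {u | ∃ g ∈ S, Bd (cls (g * s⁻¹)) K ∧ u = g * x * g⁻¹}) ?_ ?_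
  · intro s _
    refine (hS (s * x * s⁻¹)).cover (fun z => {u | ∃ g ∈ S, Bd (cls (g * s⁻¹)) K ∧
      g⁻¹ * (s * x * s⁻¹) * g = z ∧ u = g * x * g⁻¹}) ?_ ?_
    · intro z _
      by_cases hz : ∃ g ∈ S, Bd (cls (g * s⁻¹)) K ∧ g⁻¹ * (s * x * s⁻¹) * g = z
      · obtain ⟨g0, _, hb, hz⟩ := hz
        set y := s * x * s⁻¹ with hy
        have hc : Bd (cls (s * z⁻¹ * s⁻¹ * y)) (K * K) := by
          have := cls_mul_bd (cls_inv hb) (cls_conj hb y⁻¹)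
          convert this using 2
          rw [← hz]
          group
        refine (hc.image (fun u => y * u)).mono ?_
        rintro _ ⟨g, _, _, hgz, rfl⟩
        refine ⟨_, ⟨g * s⁻¹, rfl⟩, ?_⟩
        rw [← hgz, hy]
        simp only
        group
      · refine ⟨∅, ?_, by simp⟩
        rintro u ⟨g, h1, h2, h3, _⟩
        exact absurd ⟨g, h1, h2, h3⟩ hz
    · rintro _ ⟨g, hg, hb, rfl⟩
      exact ⟨_, ⟨g, hg, rfl⟩, g, hg, hb, rfl, rfl⟩
  · rintro _ ⟨g, hg, rfl⟩
    obtain ⟨s, hs, hb⟩ := hrep _ hg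
    exact ⟨s, hs, g⁻¹, hg, hb, by simp⟩

/-- The bounding function for one commutator step. -/
def stepBd (r : ℕ) : ℕ := (r * (r * ((r * r + r + 1) * (r * r + r + 1)))) * r

/-- All commutators `[a, b]`, `a ∈ S`. -/
def commSet (S : Set G) : Set G := {u | ∃ a ∈ S, ∃ b, u = pcomm a b}

/-- Closed under conjugation. -/
def Nrm (S : Set G) : Prop := ∀ a ∈ S, ∀ g : G, g⁻¹ * a * g ∈ S

theorem commSet_nrm {S : Set G} (h : Nrm S) : Nrm (commSet S) := by
  rintro _ ⟨a, ha, b, rfl⟩ g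
  exact ⟨_, h a ha g, g⁻¹ * b * g, by simp only [pcomm]; group⟩

theorem commSet_bd {S : Set G} (hn : Nrm S) {r : ℕ} (hS : ∀ x : G, Bd (conjSet x S) r) (x : G) :
    Bd (conjSet x (commSet S)) (stepBd r) := by
  refine (inv_bd hS x).cover (fun y => conjSet y S) (fun y _ => hS y) ?_
  rintro _ ⟨_, ⟨a, ha, b, rfl⟩, rfl⟩
  refine ⟨_, ⟨a⁻¹, by simpa using ha, rfl⟩, _, hn a ha b, ?_⟩
  simp only [pcomm]
  group

theorem foldl_bd (l : ℕ) {S : Set G} (hn : Nrm S) {r : ℕ} (hS : ∀ x : G, Bd (conjSet x S) r)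
    (x : G) : Bd (conjSet x {u | ∃ a ∈ S, ∃ L : List G, L.length = l ∧ u = L.foldl pcomm a})
      (stepBd^[l] r) := by
  induction l generalizing S r with
  | zero =>
    refine (hS x).mono (Set.image_mono ?_)
    rintro _ ⟨a, ha, L, hL, rfl⟩
    rw [List.length_eq_zero_iff] at hL
    subst hL
    exact ha
  | succ l ih =>
    refine (ih (commSet_nrm hn) (commSet_bd hn hS)).mono (Set.image_mono ?_)
    rintro _ ⟨a, ha, L, hL, rfl⟩
    cases L with
    | nil => simp at hL
    | cons b L => exact ⟨pcomm a b, ⟨a, ha, b, rfl⟩, L, by simpa using hL, rfl⟩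

theorem map_foldl {H : Type*} [Group H] (f : H →* G) (L : List H) (a : H) :
    f (L.foldl pcomm a) = (L.map f).foldl pcomm (f a) := by
  induction L generalizing a with
  | nil => rfl
  | cons b L ih => simp [ih, pcomm]

theorem wValues_nrm {n : ℕ} (w : FreeGroup (Fin n)) : Nrm (wValues w G) := by
  rintro _ ⟨f, rfl⟩ g
  refine ⟨fun i => g⁻¹ * f i * g, ?_⟩
  have : FreeGroup.lift (fun i => g⁻¹ * f i * g) =
      (MulAut.conj g⁻¹).toMonoidHom.comp (FreeGroup.lift f) := by
    ext i
    simp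
  simp only [this]
  simp

end BFCAux

open BFCAux in
theorem statement_5 {n : ℕ} (m : ℕ) (w : FreeGroup (Fin n)) :
    ∃ f : ℕ → ℕ, ∀ (r : ℕ) (G : Type*) [Group G],
      (∀ x : G, (conjSet x (wValues w G)).Finite ∧
        (conjSet x (wValues w G)).ncard ≤ r) →
      ∀ x : G, (conjSet x (wValues (commWord m w) G)).Finite ∧
        (conjSet x (wValues (commWord m w) G)).ncard ≤ f r := by
  refine ⟨fun r => stepBd^[m] r, fun r G _ h x => ?_⟩
  simp only [← bd_iff] at h ⊢
  refine (foldl_bd m (wValues_nrm w) h x).mono (Set.image_mono ?_)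
  rintro _ ⟨f, rfl⟩
  refine ⟨FreeGroup.lift (fun i => f (Fin.castAdd m i)) w, ⟨_, rfl⟩,
    (List.ofFn fun i : Fin m => FreeGroup.of (Fin.natAdd n i)).map (FreeGroup.lift f),
    by simp, ?_⟩
  simp only [commWord, map_foldl]
  congr 1
  have : (FreeGroup.lift f).comp (FreeGroup.map (Fin.castAdd m)) =
      FreeGroup.lift (fun i => f (Fin.castAdd m i)) := by
    ext i
    simp
  rw [← this]
  rfl
end

section
/- Let m ∈ ℕ and let w be a (1/(m+1))-concise group-word in n variables; set v = [w(x_1,...,x_n), x_{n+1}, ..., x_{n+m}]. There exists a function f : ℕ → ℕ → ℕ (depending only on w and m) such that: if G is a BFC(w)-group with |x^{G_w}| ≤ r for all x ∈ G, and B is a finite subset of G_v^*, then for every x ∈ G there exists a positive integer e ≤ f(r)(|B|) such that b^e lies in the center of the subgroup generated by x together with B, for every b ∈ B. -/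
theorem lift_comp_aux {n : ℕ} {G H : Type*} [Group G] [Group H] (φ : G →* H)
    (g : Fin n → G) (w : FreeGroup (Fin n)) :
    φ (FreeGroup.lift g w) = FreeGroup.lift (fun i => φ (g i)) w := by
  have : φ.comp (FreeGroup.lift g) = FreeGroup.lift (fun i => φ (g i)) := by
    ext i; simp
  exact DFunLike.congr_fun this w

theorem foldl_mem_aux {n : ℕ} {G : Type*} [Group G] (H : Subgroup G) (a : Fin n → G)
    (L : List (FreeGroup (Fin n))) :
    ∀ (k : ℕ) (u : FreeGroup (Fin n)), FreeGroup.lift a u ∈ iterCommSub G H k →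
      FreeGroup.lift a (L.foldl pcomm u) ∈ iterCommSub G H (k + L.length) := by
  induction L with
  | nil => intro k u h; simpa using h
  | cons y L ih =>
    intro k u h
    have h1 : FreeGroup.lift a (pcomm u y) ∈ iterCommSub G H (k + 1) := by
      have := Subgroup.commutator_mem_commutator (inv_mem h)
        (Subgroup.mem_top (FreeGroup.lift a y)⁻¹)
      simpa [pcomm, iterCommSub, commutatorElement_def] using this
    have := ih (k + 1) _ h1
    simpa [List.foldl_cons, add_assoc, add_comm, add_left_comm] using this

theorem commWord_mem_aux {n : ℕ} (m : ℕ) (w : FreeGroup (Fin n)) {G : Type*} [Group G]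
    {b : G} (hb : b ∈ wValues (commWord m w) G) :
    b ∈ iterCommSub G (verbalSubgroup w G) m := by
  obtain ⟨a, rfl⟩ := hb
  have h0 : FreeGroup.lift a (extendWord m w) ∈ iterCommSub G (verbalSubgroup w G) 0 := by
    refine Subgroup.subset_closure ⟨fun i => a (Fin.castAdd m i), ?_⟩
    have : (FreeGroup.lift a).comp (FreeGroup.map (Fin.castAdd m)) =
        FreeGroup.lift (fun i => a (Fin.castAdd m i)) := by
      ext i; simp
    exact (DFunLike.congr_fun this w).symm
  have := foldl_mem_aux (verbalSubgroup w G) a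
    (List.ofFn fun i : Fin m => FreeGroup.of (Fin.natAdd n i)) 0 _ h0
  simpa [commWord] using this

theorem wValues_finite_of_injective {n : ℕ} (w : FreeGroup (Fin n)) {G H : Type*} [Group G]
    [Group H] (φ : G →* H) (hφ : Function.Injective φ) (h : (wValues w H).Finite) :
    (wValues w G).Finite := by
  refine (h.preimage (f := φ) hφ.injOn).subset ?_
  rintro _ ⟨g, rfl⟩
  exact ⟨fun i => φ (g i), (lift_comp_aux φ g w).symm⟩

universe u v

theorem finite_order_aux {n : ℕ} (m : ℕ) (w : FreeGroup (Fin n))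
    (hw : IsFracConcise.{u} w (m + 1)) (Q : Type v) [Group Q] (hQ : (wValues w Q).Finite)
    (b : Q) (hb : b ∈ wValues (commWord m w) Q) : ∃ j : ℕ, 0 < j ∧ b ^ j = 1 := by
  obtain ⟨a, rfl⟩ := hb
  let K : Subgroup Q := (FreeGroup.lift a).range
  have : Countable (FreeGroup (Fin (n + m))) :=
    (Quot.mk_surjective (r := @FreeGroup.Red.Step (Fin (n + m)))).countable
  have : Countable K := (FreeGroup.lift a).rangeRestrict_surjective.countable
  let e : Shrink.{u} K ≃* K := Shrink.mulEquiv
  let φ : Shrink.{u} K →* Q := K.subtype.comp e.toMonoidHom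
  have hφ : Function.Injective φ := K.subtype_injective.comp e.injective
  have hfin := hw (Shrink.{u} K) (wValues_finite_of_injective w φ hφ hQ)
  let a' : Fin (n + m) → Shrink.{u} K :=
    fun i => e.symm ⟨a i, FreeGroup.of i, by simp⟩
  have hm := commWord_mem_aux m w (G := Shrink.{u} K)
    (b := FreeGroup.lift a' (commWord m w)) ⟨a', rfl⟩
  have hmap : φ (FreeGroup.lift a' (commWord m w)) = FreeGroup.lift a (commWord m w) := by
    rw [lift_comp_aux]
    congr 2
    funext i
    simp [φ, a']
  set S := iterCommSub (Shrink.{u} K) (verbalSubgroup w (Shrink.{u} K)) m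
  have : Finite S := hfin
  obtain ⟨j, hj, h⟩ := isOfFinOrder_iff_pow_eq_one.1
    (isOfFinOrder_of_finite (⟨_, hm⟩ : S))
  refine ⟨j, hj, ?_⟩
  have h' := congrArg Subtype.val h
  simp only [Subgroup.coe_pow, Subgroup.coe_one] at h'
  show (FreeGroup.lift a (commWord m w)) ^ j = 1
  rw [← hmap, ← map_pow, h', map_one]

/-- Kernel of the projection to an ultraproduct. -/
def ultraKer (F : Ultrafilter ℕ) (Q : ℕ → Type v) [∀ k, Group (Q k)] :
    Subgroup (∀ k, Q k) where
  carrier := {f | ∀ᶠ k in (F : Filter ℕ), f k = 1}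
  one_mem' := by simp
  mul_mem' := by
    intro a b ha hb
    simp only [Set.mem_ofPred_eq] at *
    filter_upwards [ha, hb] with k h1 h2
    simp [h1, h2]
  inv_mem' := by
    intro a ha
    simp only [Set.mem_ofPred_eq] at *
    filter_upwards [ha] with k h1
    simp [h1]

instance ultraKer_normal (F : Ultrafilter ℕ) (Q : ℕ → Type v) [∀ k, Group (Q k)] :
    (ultraKer F Q).Normal := by
  constructor
  intro a ha g
  change ∀ᶠ k in (F : Filter ℕ), a k = 1 at ha
  change ∀ᶠ k in (F : Filter ℕ), (g * a * g⁻¹) k = 1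
  filter_upwards [ha] with k h1
  simp [h1]

theorem bounded_aux {n : ℕ} (m : ℕ) (w : FreeGroup (Fin n))
    (hw : IsFracConcise.{u} w (m + 1)) (N : ℕ) :
    ∃ E : ℕ, 0 < E ∧ ∀ (Q : Type v) [Group Q] (c : wValues w Q → Fin N),
      Function.Injective c → ∀ b ∈ wValues (commWord m w) Q, b ^ E = 1 := by
  by_contra hcon
  push Not at hcon
  choose Q hG c hc b hb hbE using fun k : ℕ => hcon k.factorial k.factorial_pos
  choose a ha using hb
  let F : Ultrafilter ℕ := Filter.hyperfilter ℕ
  let U := (∀ k, Q k) ⧸ ultraKer F Q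
  let π : (∀ k, Q k) →* U := QuotientGroup.mk' (ultraKer F Q)
  have hπ : ∀ f g : (∀ k, Q k), (∀ᶠ k in (F : Filter ℕ), f k = g k) → π f = π g := by
    intro f g h
    refine (QuotientGroup.eq).2 ?_
    change ∀ᶠ k in (F : Filter ℕ), (f⁻¹ * g) k = 1
    filter_upwards [h] with k hk
    simp [hk]
  classical
  let en : Fin N → ∀ k, Q k := fun i k =>
    if h : ∃ q : wValues w (Q k), c k q = i then (h.choose : Q k) else 1
  have hfin : (wValues w U).Finite := by
    refine (Set.finite_range (fun i => π (en i))).subset ?_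
    rintro _ ⟨g, rfl⟩
    choose g' hg' using fun i => QuotientGroup.mk'_surjective (ultraKer F Q) (g i)
    let y : ∀ k, Q k := FreeGroup.lift g' w
    have hy : FreeGroup.lift g w = π y := by
      rw [lift_comp_aux]; congr 2; funext i; exact (hg' i).symm
    have hyk : ∀ k, y k ∈ wValues w (Q k) := fun k =>
      ⟨fun i => g' i k, (lift_comp_aux (Pi.evalMonoidHom Q k) g' w).symm⟩
    have hex : ∃ i : Fin N, ∀ᶠ k in (F : Filter ℕ), c k ⟨y k, hyk k⟩ = i := by
      have : ∀ᶠ k in (F : Filter ℕ), ∃ i : Fin N, c k ⟨y k, hyk k⟩ = i :=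
        Filter.Eventually.of_forall fun k => ⟨_, rfl⟩
      exact Ultrafilter.eventually_exists_iff.1 this
    obtain ⟨i, hi⟩ := hex
    refine ⟨i, ?_⟩
    show π (en i) = FreeGroup.lift g w
    rw [hy]
    apply hπ
    filter_upwards [hi] with k hk
    have hE : ∃ q : wValues w (Q k), c k q = i := ⟨_, hk⟩
    have h1 := hE.choose_spec
    have h2 := hc k (h1.trans hk.symm)
    simp only [en, dif_pos hE]
    rw [h2]
  obtain ⟨j, hj, h⟩ := finite_order_aux m w hw U hfin (π b)
    ⟨fun i => π (fun k => a k i), by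
      show FreeGroup.lift _ _ = _
      rw [← lift_comp_aux π (fun i k => a k i)]
      congr 1
      funext k
      rw [← ha k]
      exact lift_comp_aux (Pi.evalMonoidHom Q k) (fun i k => a k i) _⟩
  rw [← map_pow] at h
  have h1 : ∀ᶠ k in (F : Filter ℕ), (b ^ j) k = 1 :=
    (QuotientGroup.eq_one_iff (N := ultraKer F Q) (b ^ j)).1 h
  have h2 : ∀ᶠ k in (F : Filter ℕ), j ≤ k :=
    Filter.Eventually.filter_mono (Nat.hyperfilter_le_atTop)
      (Filter.eventually_ge_atTop j)
  obtain ⟨k, hk1, hk2⟩ := (h1.and h2).exists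
  obtain ⟨t, ht⟩ := Nat.dvd_factorial hj hk2
  apply hbE k
  rw [ht, pow_mul]
  have : b k ^ j = 1 := hk1
  rw [this, one_pow]

theorem statement_6 {n : ℕ} (m : ℕ) (w : FreeGroup (Fin n))
    (hw : IsFracConcise w (m + 1)) :
    ∃ f : ℕ → ℕ → ℕ, ∀ (r : ℕ) (G : Type*) [Group G],
      (∀ x : G, (conjSet x (wValues w G)).Finite ∧
        (conjSet x (wValues w G)).ncard ≤ r) →
      ∀ B : Set G, B.Finite → B ⊆ wValuesStar (commWord m w) G →
      ∀ x : G, ∃ e : ℕ, 0 < e ∧ e ≤ f r B.ncard ∧ ∀ b ∈ B,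
        b ^ e ∈ Subgroup.closure (insert x B) ⊓
          Subgroup.centralizer ((Subgroup.closure (insert x B) : Subgroup G) : Set G) := by
  choose E hE0 hE using bounded_aux m w hw
  refine ⟨fun r s => E (r ^ (s * (n + m) + 1)), ?_⟩
  intro r G _ hG B hB hBv x
  refine ⟨_, hE0 _, le_rfl, ?_⟩
  have hBa : ∀ b : B, ∃ a : Fin (n + m) → G,
      FreeGroup.lift a (commWord m w) = b ∨ FreeGroup.lift a (commWord m w) = (b : G)⁻¹ := by
    rintro ⟨b, hb⟩
    rcases hBv hb with ⟨a, ha⟩ | ⟨a, ha⟩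
    · exact ⟨a, Or.inl ha⟩
    · exact ⟨a, Or.inr ha⟩
  choose a ha using hBa
  have : Fintype B := hB.fintype
  classical
  let T := Option (B × Fin (n + m))
  let gen : T → G := fun t => t.elim x (fun p => a p.1 p.2)
  let K : Subgroup G := Subgroup.closure (Set.range gen)
  have hgen : ∀ t, gen t ∈ K := fun t => Subgroup.subset_closure ⟨t, rfl⟩
  have hcard : Fintype.card (T → Fin r) = r ^ (B.ncard * (n + m) + 1) := by
    simp [T]
  have hidx : ∀ y : G, ∃ d : conjSet y (wValues w G) → Fin r, Function.Injective d := by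
    intro y
    have : Fintype (conjSet y (wValues w G)) := (hG y).1.fintype
    have hle : Fintype.card (conjSet y (wValues w G)) ≤ Fintype.card (Fin r) := by
      have := (hG y).2
      simpa using this
    obtain ⟨d⟩ := Function.Embedding.nonempty_of_card_le hle
    exact ⟨d, d.injective⟩
  choose d hd using hidx
  let Z := Subgroup.center K
  have hlift : ∀ q : wValues w (K ⧸ Z), ∃ k : K, (k : K ⧸ Z) = q ∧ (k : G) ∈ wValues w G := by
    rintro ⟨_, g, rfl⟩
    choose g' hg' using fun i => QuotientGroup.mk'_surjective Z (g i)
    refine ⟨FreeGroup.lift g' w, ?_, ?_⟩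
    · refine (lift_comp_aux (QuotientGroup.mk' Z) g' w).trans ?_
      show _ = FreeGroup.lift g w
      congr 2; funext i; exact hg' i
    · exact ⟨_, (lift_comp_aux K.subtype g' w).symm⟩
  choose l hl1 hl2 using hlift
  let c0 : wValues w (K ⧸ Z) → (T → Fin r) := fun q t =>
    d (gen t) ⟨(l q : G)⁻¹ * gen t * l q, ⟨_, hl2 q, rfl⟩⟩
  have hc0 : Function.Injective c0 := by
    intro q q' h
    apply Subtype.ext
    rw [← hl1 q, ← hl1 q']
    refine QuotientGroup.eq.2 ?_
    have hmem : ((l q)⁻¹ * l q' : K) ∈ Z := by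
      have hcomm : ∀ t, (l q : G)⁻¹ * gen t * l q = (l q' : G)⁻¹ * gen t * l q' := fun t =>
        congrArg Subtype.val (hd (gen t) (congrFun h t))
      have hz : (l q' * (l q)⁻¹ : K) ∈ Z := by
        rw [Subgroup.mem_center_iff]
        have hK : K ≤ Subgroup.centralizer {((l q' * (l q)⁻¹ : K) : G)} := by
          refine (Subgroup.closure_le _).2 ?_
          rintro _ ⟨t, rfl⟩
          rw [SetLike.mem_coe, Subgroup.mem_centralizer_singleton_iff]
          have h3 := hcomm t
          have h4 : (l q' : G) * ((l q : G)⁻¹ * gen t * l q) * (l q : G)⁻¹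
            = l q' * ((l q' : G)⁻¹ * gen t * l q') * (l q : G)⁻¹ := by rw [h3]
          simp only [Subgroup.coe_mul, Subgroup.coe_inv]
          simp only [mul_assoc, mul_inv_cancel_left, mul_inv_cancel, mul_one] at h4 ⊢
          first | exact h4 | exact h4.symm
        intro y
        apply Subtype.ext
        have := Subgroup.mem_centralizer_singleton_iff.1 (hK y.2)
        simp only [Subgroup.coe_mul] at this ⊢
        exact this
      have := (inferInstance : Z.Normal).conj_mem _ hz (l q)⁻¹
      simpa [mul_assoc] using this
    exact hmem
  let eqv : (T → Fin r) ≃ Fin (r ^ (B.ncard * (n + m) + 1)) := Fintype.equivFinOfCardEq hcard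
  have key := hE _ (K ⧸ Z) (fun q => eqv (c0 q)) (eqv.injective.comp hc0)
  set e := E (r ^ (B.ncard * (n + m) + 1)) with he
  have hmain : ∀ b : B, (b : G) ∈ K ∧ (b : G) ^ e ∈ Subgroup.centralizer (K : Set G) := by
    intro b
    let a' : Fin (n + m) → K := fun i => ⟨a b i, hgen (some (b, i))⟩
    let v : K := FreeGroup.lift a' (commWord m w)
    have hv : (v : G) = FreeGroup.lift (a b) (commWord m w) :=
      lift_comp_aux K.subtype a' _
    have h1 : (QuotientGroup.mk' Z v) ^ e = 1 := key _
      ⟨fun i => QuotientGroup.mk' Z (a' i), (lift_comp_aux (QuotientGroup.mk' Z) a' _).symm⟩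
    rw [← map_pow] at h1
    have h2 : v ^ e ∈ Z := (QuotientGroup.eq_one_iff (N := Z) (v ^ e)).1 h1
    have h3 : (v : G) ^ e ∈ Subgroup.centralizer (K : Set G) := by
      rw [Subgroup.mem_centralizer_iff]
      intro y hy
      have := Subgroup.mem_center_iff.1 h2 ⟨y, hy⟩
      simpa using congrArg Subtype.val this
    rcases ha b with h | h
    · rw [← h, ← hv]; exact ⟨v.2, h3⟩
    · have hb : (b : G) = (v : G)⁻¹ := by rw [hv, h, inv_inv]
      rw [hb, inv_pow]
      exact ⟨inv_mem v.2, inv_mem h3⟩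
  have hle : Subgroup.closure (insert x B) ≤ K := by
    refine (Subgroup.closure_le _).2 ?_
    rintro y (rfl | hy)
    · exact hgen none
    · exact (hmain ⟨y, hy⟩).1
  intro b hb
  refine ⟨pow_mem (Subgroup.subset_closure (Set.mem_insert_of_mem _ hb)) _, ?_⟩
  exact Subgroup.centralizer_le (show ((Subgroup.closure (insert x B) : Subgroup G) : Set G) ⊆ K
    from hle) (hmain ⟨b, hb⟩).2
end

section
/- (Theorem B) Let m ∈ ℕ and let w be a (1/(m+1))-concise group-word. If G is a BFC(w)-group, then the iterated commutator subgroup [w(G), G, ..., G] (with G repeated m times) is BFC-embedded in G. -/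
open scoped commutatorElement

theorem wv_image_subset {n : ℕ} (w : FreeGroup (Fin n)) {G H : Type*} [Group G] [Group H]
    (φ : G →* H) : φ '' wValues w G ⊆ wValues w H := by
  rintro _ ⟨_, ⟨g, rfl⟩, rfl⟩
  refine ⟨fun i => φ (g i), ?_⟩
  have : (FreeGroup.lift fun i => φ (g i)) = φ.comp (FreeGroup.lift g) := by
    ext i; simp
  simp [this]

theorem wv_image_eq {n : ℕ} (w : FreeGroup (Fin n)) {G H : Type*} [Group G] [Group H]
    (φ : G →* H) (hφ : Function.Surjective φ) : φ '' wValues w G = wValues w H := by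
  apply (wv_image_subset w φ).antisymm
  rintro _ ⟨g, rfl⟩
  choose a ha using fun i => hφ (g i)
  refine ⟨_, ⟨a, rfl⟩, ?_⟩
  have : FreeGroup.lift g = φ.comp (FreeGroup.lift a) := by
    ext i; simp [ha]
  simp [this]

theorem wv_conj {n : ℕ} (w : FreeGroup (Fin n)) {G : Type*} [Group G] {s : G}
    (hs : s ∈ wValues w G) (g : G) : g * s * g⁻¹ ∈ wValues w G :=
  wv_image_subset w (MulAut.conj g).toMonoidHom ⟨s, hs, by simp⟩

/-- Normal generating set of the iterated commutator subgroup. -/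
def iterGens {n : ℕ} (w : FreeGroup (Fin n)) (G : Type*) [Group G] : ℕ → Set G
  | 0 => wValues w G
  | k + 1 => {z | ∃ s ∈ iterGens w G k, ∃ g : G, z = ⁅s, g⁆}

theorem iterGens_image {n : ℕ} (w : FreeGroup (Fin n)) {G H : Type*} [Group G] [Group H]
    (φ : G →* H) (k : ℕ) {s : G} (hs : s ∈ iterGens w G k) : φ s ∈ iterGens w H k := by
  induction k generalizing s with
  | zero => exact wv_image_subset w φ ⟨s, hs, rfl⟩
  | succ k ih =>
    obtain ⟨t, ht, g, rfl⟩ := hs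
    exact ⟨φ t, ih ht, φ g, map_commutatorElement φ t g⟩

theorem iterGens_conj {n : ℕ} (w : FreeGroup (Fin n)) {G : Type*} [Group G] (k : ℕ) {s : G}
    (hs : s ∈ iterGens w G k) (g : G) : g * s * g⁻¹ ∈ iterGens w G k := by
  simpa using iterGens_image w (MulAut.conj g).toMonoidHom k hs

theorem iterGens_closure {n : ℕ} (w : FreeGroup (Fin n)) (G : Type*) [Group G] (k : ℕ) :
    iterCommSub G (verbalSubgroup w G) k = Subgroup.closure (iterGens w G k) := by
  induction k with
  | zero => rfl
  | succ k ih =>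
    have hN : (Subgroup.closure (iterGens w G (k+1))).Normal := by
      refine ⟨fun a ha g => ?_⟩
      have : Subgroup.closure (iterGens w G (k+1)) ≤
          (Subgroup.closure (iterGens w G (k+1))).comap (MulAut.conj g).toMonoidHom := by
        rw [Subgroup.closure_le]
        intro s hs
        exact Subgroup.subset_closure (iterGens_conj w (k+1) hs g)
      exact this ha
    show ⁅iterCommSub G (verbalSubgroup w G) k, (⊤ : Subgroup G)⁆ = _
    rw [ih]
    apply le_antisymm
    · rw [Subgroup.commutator_le]
      intro a ha g _
      induction ha using Subgroup.closure_induction generalizing g with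
      | mem s hs => exact Subgroup.subset_closure ⟨s, hs, g, rfl⟩
      | one => simp
      | mul a b _ _ h1 h2 =>
        have : ⁅a * b, g⁆ = (a * ⁅b, g⁆ * a⁻¹) * ⁅a, g⁆ := by
          simp only [commutatorElement_def]; group
        rw [this]
        exact mul_mem (hN.conj_mem _ (h2 g trivial) a) (h1 g trivial)
      | inv a _ h1 =>
        have : ⁅a⁻¹, g⁆ = a⁻¹ * ⁅a, g⁆⁻¹ * a⁻¹⁻¹ := by
          simp only [commutatorElement_def]; group
        rw [this]
        exact hN.conj_mem _ (inv_mem (h1 g trivial)) _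
    · rw [Subgroup.closure_le]
      rintro _ ⟨s, hs, g, rfl⟩
      exact Subgroup.commutator_mem_commutator (Subgroup.subset_closure hs) (Subgroup.mem_top g)

theorem iterComm_image {n : ℕ} (w : FreeGroup (Fin n)) {G H : Type*} [Group G] [Group H]
    (φ : G →* H) (k : ℕ) {s : G} (hs : s ∈ iterCommSub G (verbalSubgroup w G) k) :
    φ s ∈ iterCommSub H (verbalSubgroup w H) k := by
  rw [iterGens_closure] at hs ⊢
  have : Subgroup.closure (iterGens w G k) ≤ (Subgroup.closure (iterGens w H k)).comap φ := by
    rw [Subgroup.closure_le]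
    intro t ht
    exact Subgroup.subset_closure (iterGens_image w φ k ht)
  exact this hs

theorem iterGens_local {n : ℕ} (w : FreeGroup (Fin n)) {G : Type*} [Group G] (k : ℕ) {s : G}
    (hs : s ∈ iterGens w G k) : ∃ A : Set G, A.Finite ∧ ∀ H : Subgroup G, A ⊆ H →
      ∃ t ∈ iterGens w H k, (t : G) = s := by
  induction k generalizing s with
  | zero =>
    obtain ⟨g, rfl⟩ := hs
    refine ⟨Set.range g, Set.finite_range g, fun H hH => ?_⟩
    let a : Fin n → H := fun i => ⟨g i, hH ⟨i, rfl⟩⟩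
    refine ⟨_, ⟨a, rfl⟩, ?_⟩
    have : FreeGroup.lift g = H.subtype.comp (FreeGroup.lift a) := by
      ext i; simp [a]
    simp [this]
  | succ k ih =>
    obtain ⟨t, ht, g, rfl⟩ := hs
    obtain ⟨A, hA, h⟩ := ih ht
    refine ⟨insert g A, hA.insert g, fun H hH => ?_⟩
    obtain ⟨u, hu, rfl⟩ := h H ((Set.subset_insert _ _).trans hH)
    exact ⟨⁅u, ⟨g, hH (Set.mem_insert _ _)⟩⁆, ⟨u, hu, _, rfl⟩, by simp [commutatorElement_def]⟩

theorem iterGens_local_set {n : ℕ} (w : FreeGroup (Fin n)) {G : Type*} [Group G] (k : ℕ)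
    {F : Set G} (hF : F.Finite) (hs : F ⊆ iterGens w G k) :
    ∃ A : Set G, A.Finite ∧ ∀ H : Subgroup G, A ⊆ H →
      ∀ s ∈ F, ∃ t ∈ iterGens w H k, (t : G) = s := by
  choose! A hA h using fun s (hs : s ∈ iterGens w G k) => iterGens_local w k hs
  refine ⟨⋃ s ∈ F, A s, hF.biUnion fun s hs' => hA s (hs hs'), fun H hH s hs' => ?_⟩
  exact h s (hs hs') H ((Set.subset_biUnion_of_mem (u := A) hs').trans hH)

theorem inner_finite {n : ℕ} (w : FreeGroup (Fin n)) {G : Type*} [Group G]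
    (hFC : IsFCw w G) {A : Set G} (hA : A.Finite) :
    ((MulAut.conj : Subgroup.closure A →* MulAut (Subgroup.closure A)) ''
      wValues w (Subgroup.closure A)).Finite := by
  have := hA.to_subtype
  let F : MulAut (Subgroup.closure A) → (A → G) :=
    fun α a => ((α⁻¹ ⟨a, Subgroup.subset_closure a.2⟩ : Subgroup.closure A) : G)
  have hF : Function.Injective F := by
    intro α β h
    rw [← inv_inj]
    apply MulEquiv.toMonoidHom_injective
    apply MonoidHom.eq_of_eqOn_dense (Subgroup.closure_closure_coe_preimage (k := A))
    intro a ha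
    have := congrFun h ⟨a, ha⟩
    exact Subtype.ext this
  refine Set.Finite.of_finite_image ?_ hF.injOn
  refine (Set.Finite.pi' (t := fun a : A => conjSet (a : G) (wValues w G))
    (fun a => hFC a)).subset ?_
  rintro _ ⟨_, ⟨h, hh, rfl⟩, rfl⟩ a
  refine ⟨h, wv_image_subset w (Subgroup.closure A).subtype ⟨h, hh, rfl⟩, ?_⟩
  simp [F]

theorem closure_ctble {G : Type*} [Group G] {A : Set G} (hA : A.Finite) :
    Countable (Subgroup.closure A) := by
  have := hA.to_subtype
  have : Countable (FreeGroup A) := by unfold FreeGroup; infer_instance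
  rw [FreeGroup.closure_eq_range]
  exact (MonoidHom.rangeRestrict_surjective _).countable

theorem card_image_sum {α β : Type*} [DecidableEq β] (N : Finset α) (f : α → β) :
    ((N.image f).card : ℚ) = ∑ a ∈ N, ((N.filter fun b => f b = f a).card : ℚ)⁻¹ := by
  classical
  rw [← Finset.sum_fiberwise_of_maps_to (t := N.image f) (g := f)
    (fun a ha => Finset.mem_image_of_mem f ha)]
  rw [Finset.card_eq_sum_ones, Nat.cast_sum]
  refine Finset.sum_congr rfl fun b hb => ?_
  have : ∀ a ∈ N.filter (fun a => f a = b), ((N.filter fun c => f c = f a).card : ℚ)⁻¹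
      = ((N.filter fun c => f c = b).card : ℚ)⁻¹ := by
    intro a ha
    rw [(Finset.mem_filter.1 ha).2]
  rw [Finset.sum_congr rfl this, Finset.sum_const, nsmul_eq_mul, mul_inv_cancel₀]
  · simp
  · obtain ⟨a, ha, rfl⟩ := Finset.mem_image.1 hb
    have : a ∈ N.filter (fun c => f c = f a) := by simp [ha]
    exact_mod_cast (Finset.card_pos.2 ⟨a, this⟩).ne'

theorem ncard_left_right {A X : Type*} [Group A] [MulAction A X] {N : Set A} (hN : N.Finite)
    (hc : ∀ a ∈ N, ∀ b ∈ N, a * b * a⁻¹ ∈ N) (hc' : ∀ a ∈ N, ∀ b ∈ N, a⁻¹ * b * a ∈ N) (x : X) :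
    ((fun a : A => a • x) '' N).ncard = ((fun a : A => a⁻¹ • x) '' N).ncard := by
  classical
  lift N to Finset A using hN
  rw [← Finset.coe_image, ← Finset.coe_image, Set.ncard_coe_finset, Set.ncard_coe_finset]
  have : ((N.image fun a : A => a • x).card : ℚ) = (N.image fun a : A => a⁻¹ • x).card := by
    rw [card_image_sum, card_image_sum]
    refine Finset.sum_congr rfl fun a ha => ?_
    congr 2
    refine Finset.card_bij' (fun b _ => a⁻¹ * b * a) (fun b _ => a * b * a⁻¹) ?_ ?_ ?_ ?_
    · intro b hb
      simp only [Finset.mem_filter] at hb ⊢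
      refine ⟨hc' a ha b hb.1, ?_⟩
      have : b⁻¹ • a • x = x := by rw [← hb.2, inv_smul_smul]
      simp only [mul_inv_rev, inv_inv, mul_smul, this]
    · intro b hb
      simp only [Finset.mem_filter] at hb ⊢
      refine ⟨hc a ha b hb.1, ?_⟩
      rw [mul_smul, mul_smul, ← hb.2, smul_inv_smul]
    · intro b _; group
    · intro b _; group
  exact_mod_cast this

theorem conjSet_inv_finite {n : ℕ} (w : FreeGroup (Fin n)) {G : Type*} [Group G]
    (hBFC : IsBFCw w G) (x : G) : ((fun g => g * x * g⁻¹) '' wValues w G).Finite := by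
  classical
  obtain ⟨c, hc⟩ := hBFC
  by_contra hinf
  obtain ⟨T, hT, hTc⟩ := Set.Infinite.exists_subset_card_eq hinf (c + 1)
  obtain ⟨F, hFw, hF⟩ := Finset.subset_set_image_iff.1 hT
  obtain ⟨A, hA, hAF⟩ := iterGens_local_set w 0 F.finite_toSet hFw
  set B := insert x A with hB
  have hBf : B.Finite := hA.insert x
  have hin := inner_finite w (fun y => (hc y).1) hBf
  let x' : Subgroup.closure B := ⟨x, Subgroup.subset_closure (Set.mem_insert _ _)⟩
  have key := ncard_left_right hin ?_ ?_ x'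
  · have h1 : ((fun a : MulAut (Subgroup.closure B) => a⁻¹ • x') ''
        (MulAut.conj '' wValues w (Subgroup.closure B))).ncard ≤ c := by
      refine le_trans ?_ (hc x).2
      refine Set.ncard_le_ncard_of_injOn (fun y => (y : G)) ?_ Subtype.val_injective.injOn (hc x).1
      rintro _ ⟨_, ⟨h, hh, rfl⟩, rfl⟩
      exact ⟨h, wv_image_subset w (Subgroup.closure B).subtype ⟨h, hh, rfl⟩, by simp [x']⟩
    have h2 : c + 1 ≤ ((fun a : MulAut (Subgroup.closure B) => a • x') ''
        (MulAut.conj '' wValues w (Subgroup.closure B))).ncard := by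
      rw [← Set.ncard_image_of_injective _ (Subtype.val_injective)]
      rw [← hTc, ← Set.ncard_coe_finset T]
      refine Set.ncard_le_ncard ?_ ((hin.image _).image _)
      intro y hy
      rw [← hF] at hy
      simp only [Finset.coe_image] at hy
      obtain ⟨f, hf, rfl⟩ := hy
      obtain ⟨t, ht, rfl⟩ := hAF (Subgroup.closure B)
        ((Set.subset_insert _ _).trans Subgroup.subset_closure) f hf
      exact ⟨_, ⟨_, ⟨t, ht, rfl⟩, rfl⟩, by simp [x']⟩
    omega
  · rintro _ ⟨a, ha, rfl⟩ _ ⟨b, hb, rfl⟩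
    exact ⟨a * b * a⁻¹, wv_conj w hb a, by simp⟩
  · rintro _ ⟨a, ha, rfl⟩ _ ⟨b, hb, rfl⟩
    exact ⟨a⁻¹ * b * a, by simpa using wv_conj w hb a⁻¹, by simp⟩

theorem iterGens_finite {n : ℕ} (w : FreeGroup (Fin n)) {G : Type*} [Group G]
    (hBFC : IsBFCw w G) (k : ℕ) (x : G) : (conjSet x (iterGens w G k)).Finite ∧
      ((fun g => g * x * g⁻¹) '' iterGens w G k).Finite := by
  induction k generalizing x with
  | zero => 
    refine ⟨?_, conjSet_inv_finite w hBFC x⟩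
    obtain ⟨c, hc⟩ := hBFC
    exact (hc x).1
  | succ k ih =>
    have hfin : (⋃ y ∈ conjSet x (iterGens w G k),
        (fun g => g * y * g⁻¹) '' iterGens w G k).Finite :=
      (ih x).1.biUnion fun y _ => (ih y).2
    constructor
    · refine hfin.subset ?_
      rintro _ ⟨_, ⟨s, hs, g, rfl⟩, rfl⟩
      refine Set.mem_biUnion ⟨s, hs, rfl⟩ ⟨g * s * g⁻¹, iterGens_conj w k hs g, ?_⟩
      simp only [commutatorElement_def]; group
    · refine hfin.subset ?_
      rintro _ ⟨_, ⟨s, hs, g, rfl⟩, rfl⟩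
      refine Set.mem_biUnion ⟨g * s * g⁻¹, iterGens_conj w k hs g, rfl⟩ ⟨s, hs, ?_⟩
      simp only [commutatorElement_def]; group

theorem conj_finite_fg.{u, v} {n : ℕ} (m : ℕ) (w : FreeGroup (Fin n))
    (hw : IsFracConcise.{v} w (m + 1)) {G : Type u} [Group G] (hFC : IsFCw w G) {A : Set G}
    (hA : A.Finite) (x : Subgroup.closure A) :
    (conjSet x (iterCommSub (Subgroup.closure A)
      (verbalSubgroup w (Subgroup.closure A)) m : Set (Subgroup.closure A))).Finite := by
  let L := Subgroup.closure A
  have : Countable L := closure_ctble hA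
  let cj : L →* MulAut L := MulAut.conj
  have : Countable cj.range := (MonoidHom.rangeRestrict_surjective cj).countable
  have hQ : (wValues w cj.range).Finite := by
    rw [← wv_image_eq w _ (MonoidHom.rangeRestrict_surjective cj)]
    refine Set.Finite.of_finite_image (f := Subtype.val) ?_ Subtype.val_injective.injOn
    rw [← Set.image_comp]
    exact inner_finite w hFC hA
  let e : Shrink.{v} cj.range ≃* cj.range := Shrink.mulEquiv
  have hQ' : (wValues w (Shrink.{v} cj.range)).Finite :=
    Set.Finite.of_finite_image (f := e) (hQ.subset (wv_image_subset w e.toMonoidHom))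
      e.injective.injOn
  have hfin := hw _ hQ'
  simp only [Nat.add_sub_cancel] at hfin
  refine (hfin.image fun q => (((e q : cj.range) : MulAut L)⁻¹ • x)).subset ?_
  rintro _ ⟨g, hg, rfl⟩
  refine ⟨_, iterComm_image w (e.symm.toMonoidHom.comp cj.rangeRestrict) m hg, ?_⟩
  simp [cj]

theorem conj_finite {n : ℕ} (m : ℕ) (w : FreeGroup (Fin n))
    (hw : IsFracConcise w (m + 1)) {G : Type*} [Group G] (hBFC : IsBFCw w G) (x : G) :
    (conjSet x (iterCommSub G (verbalSubgroup w G) m : Set G)).Finite := by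
  have hFC : IsFCw w G := by
    obtain ⟨c, hc⟩ := hBFC
    exact fun y => (hc y).1
  obtain ⟨h1, h2⟩ := iterGens_finite w hBFC m x
  obtain ⟨F1, hF1, hF1f, hF1e⟩ := Set.Finite.exists_subset_finite_image_eq h1 subset_rfl
  obtain ⟨F2, hF2, hF2f, hF2e⟩ := Set.Finite.exists_subset_finite_image_eq h2 subset_rfl
  obtain ⟨A, hA, hAF⟩ := iterGens_local_set w m (hF1f.union hF2f) (Set.union_subset hF1 hF2)
  set B := insert x A with hB
  have hBf : B.Finite := hA.insert x
  let x' : Subgroup.closure B := ⟨x, Subgroup.subset_closure (Set.mem_insert _ _)⟩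
  have hfin := conj_finite_fg m w hw hFC hBf x'
  refine (hfin.image Subtype.val).subset ?_
  rintro _ ⟨g, hg, rfl⟩
  have hAB : A ⊆ Subgroup.closure B := (Set.subset_insert _ _).trans Subgroup.subset_closure
  suffices h : ∃ f ∈ iterCommSub (Subgroup.closure B) (verbalSubgroup w (Subgroup.closure B)) m,
      g⁻¹ * x * g = (f : G)⁻¹ * x * f by
    obtain ⟨f, hf, h⟩ := h
    exact ⟨_, ⟨f, hf, rfl⟩, by simp [x', h]⟩
  rw [SetLike.mem_coe, iterGens_closure] at hg
  rw [iterGens_closure]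
  induction hg using Subgroup.closure_induction_right with
  | one => exact ⟨1, one_mem _, by simp⟩
  | mul_right h _ s hs ih =>
    obtain ⟨f, hf, ih⟩ := ih
    have : ((f : G) * s * (f : G)⁻¹)⁻¹ * x * ((f : G) * s * (f : G)⁻¹) ∈
      (fun g => g⁻¹ * x * g) '' F1 := hF1e ▸ ⟨_, iterGens_conj w m hs f, rfl⟩
    obtain ⟨a, ha, hae⟩ := this
    obtain ⟨t, ht, rfl⟩ := hAF _ hAB a (Or.inl ha)
    refine ⟨t * f, mul_mem (Subgroup.subset_closure ht) hf, ?_⟩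
    calc (h * s)⁻¹ * x * (h * s) = s⁻¹ * (h⁻¹ * x * h) * s := by group
      _ = (f : G)⁻¹ * (((f : G) * s * (f : G)⁻¹)⁻¹ * x * ((f : G) * s * (f : G)⁻¹)) * f := by
        rw [ih]; group
      _ = _ := by rw [← hae]; push_cast; group
  | mul_inv_cancel h _ s hs ih =>
    obtain ⟨f, hf, ih⟩ := ih
    have : ((f : G) * s * (f : G)⁻¹) * x * ((f : G) * s * (f : G)⁻¹)⁻¹ ∈
      (fun g => g * x * g⁻¹) '' F2 := hF2e ▸ ⟨_, iterGens_conj w m hs f, rfl⟩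
    obtain ⟨a, ha, hae⟩ := this
    obtain ⟨t, ht, rfl⟩ := hAF _ hAB a (Or.inr ha)
    refine ⟨t⁻¹ * f, mul_mem (inv_mem (Subgroup.subset_closure ht)) hf, ?_⟩
    calc (h * s⁻¹)⁻¹ * x * (h * s⁻¹) = s * (h⁻¹ * x * h) * s⁻¹ := by group
      _ = (f : G)⁻¹ * (((f : G) * s * (f : G)⁻¹) * x * ((f : G) * s * (f : G)⁻¹)⁻¹) * f := by
        rw [ih]; group
      _ = _ := by rw [← hae]; push_cast; group

theorem mem_wv_pi {n : ℕ} (w : FreeGroup (Fin n)) {G ι : Type*} [Group G] {s : ι → G} :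
    s ∈ wValues w (ι → G) ↔ ∀ i, s i ∈ wValues w G := by
  constructor
  · intro h i
    exact wv_image_subset w (Pi.evalMonoidHom (fun _ => G) i) ⟨s, h, rfl⟩
  · intro h
    choose a ha using h
    refine ⟨fun j i => a i j, ?_⟩
    ext i
    rw [← ha i]
    have : FreeGroup.lift (a i) = (Pi.evalMonoidHom (fun _ => G) i).comp
        (FreeGroup.lift fun j i => a i j) := by
      ext j; simp
    simp [this]

theorem mem_iterGens_pi {n : ℕ} (w : FreeGroup (Fin n)) {G ι : Type*} [Group G] (k : ℕ)
    {s : ι → G} (h : ∀ i, s i ∈ iterGens w G k) : s ∈ iterGens w (ι → G) k := by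
  induction k generalizing s with
  | zero => exact (mem_wv_pi w).2 h
  | succ k ih =>
    choose t ht g hg using h
    exact ⟨t, ih ht, g, funext hg⟩

open Filter in
theorem bfc_germ {n : ℕ} (w : FreeGroup (Fin n)) (G : Type*) [Group G] (hBFC : IsBFCw w G) :
    IsBFCw w ((hyperfilter ℕ : Filter ℕ).Germ G) := by
  obtain ⟨c, hc⟩ := hBFC
  refine ⟨c, fun x => ?_⟩
  let π : (ℕ → G) →* (hyperfilter ℕ : Filter ℕ).Germ G := Germ.coeMulHom _
  have hπ : Function.Surjective π := fun g => Germ.inductionOn g fun f => ⟨f, rfl⟩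
  suffices h : ∀ T : Finset ((hyperfilter ℕ : Filter ℕ).Germ G),
      (T : Set _) ⊆ conjSet x (wValues w ((hyperfilter ℕ : Filter ℕ).Germ G)) → T.card ≤ c by
    have hf : (conjSet x (wValues w ((hyperfilter ℕ : Filter ℕ).Germ G))).Finite := by
      by_contra hinf
      obtain ⟨T, hT, hTc⟩ := Set.Infinite.exists_subset_card_eq hinf (c + 1)
      have := h T hT
      omega
    refine ⟨hf, ?_⟩
    rw [Set.ncard_eq_toFinset_card _ hf]
    exact h _ (by simp)
  intro T hT
  obtain ⟨x, rfl⟩ := hπ x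
  have h1 : ∀ y ∈ T, ∃ s : ℕ → G, (∀ i, s i ∈ wValues w G) ∧ y = π (s⁻¹ * x * s) := by
    intro y hy
    obtain ⟨g, hg, rfl⟩ := hT hy
    rw [← wv_image_eq w π hπ] at hg
    obtain ⟨s, hs, rfl⟩ := hg
    exact ⟨s, (mem_wv_pi w).1 hs, by simp⟩
  choose! s hs hy using h1
  have h2 : ∀ᶠ i in (hyperfilter ℕ : Filter ℕ), ∀ y ∈ T, ∀ z ∈ T, y ≠ z →
      ((s y)⁻¹ * x * s y) i ≠ ((s z)⁻¹ * x * s z) i := by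
    rw [Filter.eventually_all_finset]
    intro y hyT
    rw [Filter.eventually_all_finset]
    intro z hzT
    by_cases hyz : y = z
    · simp [hyz]
    · have : ¬ ∀ᶠ i in (hyperfilter ℕ : Filter ℕ),
          ((s y)⁻¹ * x * s y) i = ((s z)⁻¹ * x * s z) i := by
        intro h
        apply hyz
        rw [hy y hyT, hy z hzT]
        exact Germ.coe_eq.2 h
      rw [← Ultrafilter.eventually_not] at this
      exact this.mono fun i hi _ => hi
  obtain ⟨i, hi⟩ := h2.exists
  rw [← Set.ncard_coe_finset]
  refine le_trans ?_ (hc (x i)).2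
  refine Set.ncard_le_ncard_of_injOn (fun y => ((s y)⁻¹ * x * s y) i) ?_ ?_ (hc (x i)).1
  · intro y hyT
    exact ⟨s y i, hs y hyT i, by simp⟩
  · intro y hyT z hzT h
    by_contra hne
    exact hi y hyT z hzT hne h

open Filter in
theorem bounded_of_germ {n : ℕ} (m : ℕ) (w : FreeGroup (Fin n)) (G : Type*) [Group G]
    (hfin : ∀ x : (hyperfilter ℕ : Filter ℕ).Germ G,
      (conjSet x (iterCommSub _ (verbalSubgroup w ((hyperfilter ℕ : Filter ℕ).Germ G)) m :
        Set ((hyperfilter ℕ : Filter ℕ).Germ G))).Finite) :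
    IsBFCEmbedded (iterCommSub G (verbalSubgroup w G) m) := by
  classical
  by_contra hcon
  unfold IsBFCEmbedded at hcon
  push Not at hcon
  choose x hx using hcon
  let π : (ℕ → G) →* (hyperfilter ℕ : Filter ℕ).Germ G := Germ.coeMulHom _
  have hπ : Function.Surjective π := fun g => Germ.inductionOn g fun f => ⟨f, rfl⟩
  have hD := hfin (π x)
  set D := conjSet (π x) (iterCommSub _ (verbalSubgroup w ((hyperfilter ℕ : Filter ℕ).Germ G)) m :
        Set ((hyperfilter ℕ : Filter ℕ).Germ G)) with hDdef
  have hxD : π x ∈ D := ⟨1, one_mem _, by simp⟩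
  have hDcl : ∀ y ∈ D, ∀ s : ℕ → G, (∀ i, s i ∈ iterGens w G m) →
      (π (s⁻¹) * y * π s ∈ D ∧ π s * y * π s⁻¹ ∈ D) := by
    rintro _ ⟨g, hg, rfl⟩ s hs
    have h1 : π s ∈ iterCommSub _ (verbalSubgroup w ((hyperfilter ℕ : Filter ℕ).Germ G)) m := by
      rw [iterGens_closure]
      exact Subgroup.subset_closure (iterGens_image w π m (mem_iterGens_pi w m hs))
    refine ⟨⟨g * π s, mul_mem hg h1, ?_⟩, ⟨g * (π s)⁻¹, mul_mem hg (inv_mem h1), ?_⟩⟩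
    · simp only [map_inv]; group
    · simp only [map_inv]; group
  choose r hr using hπ
  let E : ℕ → Set G := fun i => (fun y => r y i) '' D
  have hE : ∀ y ∈ D, ∀ f : ℕ → G, π f = y → ∀ᶠ i in (hyperfilter ℕ : Filter ℕ), f i ∈ E i := by
    intro y hy f hf
    have : f =ᶠ[(hyperfilter ℕ : Filter ℕ)] r y := Germ.coe_eq.1 (hf.trans (hr y).symm)
    exact this.mono fun i hi => ⟨y, hy, hi.symm⟩
  have hclos : ∀ y ∈ D, ∀ᶠ i in (hyperfilter ℕ : Filter ℕ), ∀ s ∈ iterGens w G m,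
      s⁻¹ * r y i * s ∈ E i ∧ s * r y i * s⁻¹ ∈ E i := by
    intro y hy
    have hne : (iterGens w G m).Nonempty := by
      clear * -
      induction m with
      | zero => exact ⟨_, fun _ => 1, rfl⟩
      | succ k ih => obtain ⟨s, hs⟩ := ih; exact ⟨_, s, hs, 1, rfl⟩
    obtain ⟨s0, hs0⟩ := hne
    let P : ℕ → G → Prop := fun i s => s ∈ iterGens w G m ∧
      ¬ (s⁻¹ * r y i * s ∈ E i ∧ s * r y i * s⁻¹ ∈ E i)
    let s : ℕ → G := fun i => if h : ∃ s, P i s then h.choose else s0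
    have hsm : ∀ i, s i ∈ iterGens w G m := by
      intro i
      by_cases h : ∃ s, P i s
      · simp only [s, dif_pos h]; exact h.choose_spec.1
      · simp only [s, dif_neg h]; exact hs0
    obtain ⟨h1, h2⟩ := hDcl y hy s hsm
    have e1 := hE _ h1 (s⁻¹ * r y * s) (by rw [map_mul, map_mul, hr])
    have e2 := hE _ h2 (s * r y * s⁻¹) (by rw [map_mul, map_mul, hr])
    filter_upwards [e1, e2] with i h1 h2
    by_contra hcon
    push Not at hcon
    have h : ∃ s, P i s := by
      obtain ⟨t, ht, ht'⟩ := hcon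
      exact ⟨t, ht, fun h => ht' h.1 h.2⟩
    have h3 := h.choose_spec.2
    have : s i = h.choose := by simp only [s, dif_pos h]
    rw [← this] at h3
    exact h3 ⟨h1, h2⟩
  have hall := (Filter.eventually_all_finite hD).2 hclos
  have hlarge : ∀ᶠ i in (hyperfilter ℕ : Filter ℕ), D.ncard ≤ i :=
    (Nat.cofinite_eq_atTop ▸ (eventually_ge_atTop D.ncard) :
      ∀ᶠ i in cofinite, D.ncard ≤ i).filter_mono Filter.hyperfilter_le_cofinite
  obtain ⟨i, h1, h2, h3⟩ := (hall.and (hlarge.and (hE _ hxD x rfl))).exists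
  have hEf : (E i).Finite := hD.image _
  have hsub : conjSet (x i) (iterCommSub G (verbalSubgroup w G) m : Set G) ⊆ E i := by
    rintro _ ⟨g, hg, rfl⟩
    rw [SetLike.mem_coe, iterGens_closure] at hg
    induction hg using Subgroup.closure_induction_right with
    | one => simpa using h3
    | mul_right h _ s hs ih =>
      obtain ⟨y, hy, hye⟩ := ih
      have := (h1 y hy s hs).1
      simp only at hye
      rw [hye] at this
      convert this using 1
      simp only; group
    | mul_inv_cancel h _ s hs ih =>
      obtain ⟨y, hy, hye⟩ := ih
      have := (h1 y hy s hs).2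
      simp only at hye
      rw [hye] at this
      convert this using 1
      simp only; group
  have h4 := hx i (hEf.subset hsub)
  have h5 := Set.ncard_le_ncard hsub hEf
  have h6 : (E i).ncard ≤ D.ncard := Set.ncard_image_le hD
  omega

/-- Theorem B: if `w` is `(1/(m+1))`-concise and `G` is a `BFC(w)`-group,
then `[w(G), G, ..., G]` (`G` repeated `m` times) is `BFC`-embedded in `G`. -/
theorem statement_7 {n : ℕ} (m : ℕ) (w : FreeGroup (Fin n))
    (hw : IsFracConcise w (m + 1)) (G : Type*) [Group G] (hBFC : IsBFCw w G) :
    IsBFCEmbedded (iterCommSub G (verbalSubgroup w G) m) := by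
  exact bounded_of_germ m w G (conj_finite m w hw (bfc_germ w G hBFC))
end

section
/- Let w be a group-word in n variables and set v = [w(x_1,...,x_n), x_{n+1}], the commutator of w with one fresh variable. If w is (1/(m+1))-concise for some m ∈ ℕ, then v is (1/(m+1))-concise. -/
section Helpers

open Subgroup
open scoped commutatorElement

universe u v

theorem aux_finiteIndex {G : Type*} [Group G] {α : Type*} [Finite α] (C : Subgroup G) (f : G → α)
    (h : ∀ g g', f g = f g' → g⁻¹ * g' ∈ C) : C.FiniteIndex := by
  have : Finite (G ⧸ C) := by
    refine Finite.of_injective (fun q : G ⧸ C => f q.out) ?_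
    intro q q' hq
    have := h _ _ hq
    rw [← QuotientGroup.eq, QuotientGroup.out_eq', QuotientGroup.out_eq'] at this
    exact this
  exact finiteIndex_of_finite_quotient

theorem aux_centralizer {G : Type*} [Group G] (X : Set G) (hX : X.Finite)
    (hc : ∀ x ∈ X, ∀ g : G, g * x * g⁻¹ ∈ X) : (centralizer X).FiniteIndex := by
  have : Finite X := hX
  refine aux_finiteIndex (α := X → X) _ (fun g x => ⟨g * x * g⁻¹, hc x x.2 g⟩) ?_
  intro g g' h
  rw [mem_centralizer_iff]
  intro x hx
  have h1 : g * x * g⁻¹ = g' * x * g'⁻¹ := congrArg Subtype.val (congrFun h ⟨x, hx⟩)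
  have h2 : x = g⁻¹ * (g' * x * g'⁻¹) * g := by rw [← h1]; group
  calc x * (g⁻¹ * g') = (g⁻¹ * (g' * x * g'⁻¹) * g) * (g⁻¹ * g') := by rw [← h2]
    _ = g⁻¹ * g' * x := by group

theorem aux_finite_map {G G' : Type*} [Group G] [Group G'] (f : G →* G') (S : Set G)
    (h1 : (f '' S).Finite) (h2 : (f.ker : Set G).Finite) : S.Finite := by
  refine Set.Finite.of_finite_fibers f h1 ?_
  rintro _ ⟨k, hk, rfl⟩
  refine (h2.image (k * ·)).subset ?_
  rintro x ⟨hx, hx'⟩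
  refine ⟨k⁻¹ * x, ?_, by simp⟩
  simp only [Set.mem_preimage, Set.mem_singleton_iff] at hx'
  simp [MonoidHom.mem_ker, hx']

theorem aux_comm_finite {G : Type*} [Group G] (K C : Subgroup G) [C.FiniteIndex]
    (hC : ∀ c ∈ C, ∀ k ∈ K, c * k = k * c)
    (hK : ((QuotientGroup.mk : G → G ⧸ center G) '' K).Finite) :
    {x : G | ∃ k ∈ K, ∃ g ∈ (⊤ : Subgroup G), ⁅k, g⁆ = x}.Finite := by
  have : Finite ((QuotientGroup.mk : G → G ⧸ center G) '' K) := hK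
  choose s hs using fun q : ((QuotientGroup.mk : G → G ⧸ center G) '' K) => q.2
  refine (Set.finite_range (fun p : ((QuotientGroup.mk : G → G ⧸ center G) '' K) × (G ⧸ C) =>
    ⁅s p.1, p.2.out⁆)).subset ?_
  rintro x ⟨k, hk, g, -, rfl⟩
  refine ⟨(⟨k, k, hk, rfl⟩, g), ?_⟩
  obtain ⟨h1, h2⟩ := hs ⟨k, k, hk, rfl⟩
  have h3 : (s ⟨(k : G ⧸ center G), k, hk, rfl⟩)⁻¹ * k ∈ center G := QuotientGroup.eq.1 h2
  have h4 : (g : G ⧸ C).out⁻¹ * g ∈ C := by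
    rw [← QuotientGroup.eq, QuotientGroup.out_eq']
  simp only
  generalize (g : G ⧸ C).out = g' at h4
  clear hs
  generalize s ⟨(k : G ⧸ center G), k, hk, rfl⟩ = k' at h1 h2 h3
  obtain ⟨z, rfl⟩ : ∃ z, k = k' * z := ⟨k'⁻¹ * k, by group⟩
  obtain ⟨c, rfl⟩ : ∃ c, g = g' * c := ⟨g'⁻¹ * g, by group⟩
  simp only [inv_mul_cancel_left] at h3 h4
  rw [mem_center_iff] at h3
  have h5 := hC c h4 _ (K.inv_mem h1)
  simp only [commutatorElement_def]
  calc k' * g' * k'⁻¹ * g'⁻¹ = k' * g' * k'⁻¹ * (c * c⁻¹) * g'⁻¹ := by group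
    _ = k' * g' * (k'⁻¹ * c) * c⁻¹ * g'⁻¹ := by group
    _ = k' * g' * (c * k'⁻¹) * c⁻¹ * g'⁻¹ := by rw [h5]
    _ = k' * (g' * c) * (z * z⁻¹) * k'⁻¹ * c⁻¹ * g'⁻¹ := by group
    _ = k' * ((g' * c) * z) * z⁻¹ * k'⁻¹ * c⁻¹ * g'⁻¹ := by group
    _ = k' * (z * (g' * c)) * z⁻¹ * k'⁻¹ * c⁻¹ * g'⁻¹ := by rw [h3]
    _ = _ := by group

theorem aux_schur {G : Type*} [Group G] (h : (center G).FiniteIndex) :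
    Finite (_root_.commutator G) := by
  have : Finite (commutatorSet G) := by
    refine (aux_comm_finite (⊤ : Subgroup G) (center G) ?_ (Set.toFinite _)).subset ?_
    · intro c hc k _
      exact (mem_center_iff.1 hc k).symm
    · rintro _ ⟨a, b, rfl⟩
      exact ⟨a, mem_top _, b, mem_top _, rfl⟩
  infer_instance

theorem aux_dietzmann {G : Type*} [Group G] (X : Set G) (hX : X.Finite)
    (hc : ∀ x ∈ X, ∀ g : G, g * x * g⁻¹ ∈ X) (ht : ∀ x ∈ X, IsOfFinOrder x) :
    (closure X : Set G).Finite := by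
  have hC := aux_centralizer X hX hc
  have hZ : (center (closure X)).FiniteIndex := by
    have : ((centralizer X).subgroupOf (closure X)).FiniteIndex := inferInstance
    refine finiteIndex_of_le (H := (centralizer X).subgroupOf (closure X)) ?_
    intro c hc'
    rw [mem_subgroupOf, ← centralizer_closure, mem_centralizer_iff] at hc'
    rw [mem_center_iff]
    intro g
    exact Subtype.ext (hc' g g.2)
  have h1 := aux_schur hZ
  have hfg : Group.FG (closure X) := by
    have : Finite X := hX
    exact Group.closure_finite_fg X
  have hfin : Finite (Abelianization (closure X)) := by
    have : Group.FG (Abelianization (closure X)) := by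
      exact Group.fg_of_surjective (f := Abelianization.of) QuotientGroup.mk_surjective
    refine CommGroup.finite_of_fg_isMulTorsion _ ?_
    have key : ∀ x (hx : x ∈ closure X),
        IsOfFinOrder (Abelianization.of (⟨x, hx⟩ : closure X)) := by
      intro x hx
      induction hx using closure_induction with
      | mem x hx =>
        refine MonoidHom.isOfFinOrder _ ?_
        exact (Submonoid.isOfFinOrder_coe (H := (closure X).toSubmonoid)).1 (ht x hx)
      | one => 
        have : (⟨1, (closure X).one_mem⟩ : closure X) = 1 := rfl
        rw [this, map_one]
        exact IsOfFinOrder.one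
      | mul x y hx hy h1 h2 =>
        exact (map_mul Abelianization.of (⟨x, hx⟩ : closure X) ⟨y, hy⟩) ▸ h1.mul h2
      | inv x hx h1 =>
        exact (map_inv Abelianization.of (⟨x, hx⟩ : closure X)) ▸ h1.inv
    intro y
    obtain ⟨⟨x, hx⟩, rfl⟩ := QuotientGroup.mk_surjective y
    exact key x hx
  have h2 : Finite (closure X) := by
    rw [← Set.finite_univ_iff]
    refine aux_finite_map Abelianization.of Set.univ (Set.toFinite _) ?_
    rw [Abelianization.ker_of]
    exact h1
  exact h2

theorem aux_baer {G : Type*} [Group G] (K C : Subgroup G) [K.Normal] [C.FiniteIndex]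
    (hC : ∀ c ∈ C, ∀ k ∈ K, c * k = k * c)
    (hK : ((QuotientGroup.mk : G → G ⧸ center G) '' K).Finite) :
    ((⁅K, (⊤ : Subgroup G)⁆ : Subgroup G) : Set G).Finite := by
  rw [Subgroup.commutator_def]
  have hZ : ((center G).subgroupOf K).FiniteIndex := by
    have : Finite ((QuotientGroup.mk : G → G ⧸ center G) '' K) := hK
    refine aux_finiteIndex (α := ((QuotientGroup.mk : G → G ⧸ center G) '' K)) _
      (fun k => ⟨(k : G), k, k.2, rfl⟩) ?_
    intro g g' h
    have := congrArg Subtype.val h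
    simp only at this
    rw [QuotientGroup.eq] at this
    exact this
  have hZ' : (center K).FiniteIndex := by
    refine finiteIndex_of_le (H := (center G).subgroupOf K) ?_
    intro c hc
    rw [mem_subgroupOf, mem_center_iff] at hc
    rw [mem_center_iff]
    intro g
    exact Subtype.ext (hc g)
  have hS := aux_schur hZ'
  refine aux_dietzmann _ (aux_comm_finite K C hC hK) ?_ ?_
  · rintro _ ⟨k, hk, g, -, rfl⟩ h
    refine ⟨h * k * h⁻¹, Normal.conj_mem ‹_› k hk h, h * g * h⁻¹, mem_top _, ?_⟩
    simp only [commutatorElement_def]; group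
  · rintro _ ⟨k, hk, g, -, rfl⟩
    obtain ⟨N, hN, -, hp⟩ : ∃ N, 0 < N ∧ True ∧
        (⟨k, hk⟩ : K) ^ N ∈ (center G).subgroupOf K := by
      obtain ⟨N, hN, -, hp⟩ := exists_pow_mem_of_index_ne_zero hZ.index_ne_zero ⟨k, hk⟩
      exact ⟨N, hN, trivial, hp⟩
    rw [mem_subgroupOf, mem_center_iff] at hp
    let k' : K := ⟨g * k⁻¹ * g⁻¹, Normal.conj_mem ‹_› _ (K.inv_mem hk) g⟩
    let y : K := ⟨k, hk⟩ * k'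
    have hy : (y : G) = ⁅k, g⁆ := by
      simp only [y, k', commutatorElement_def, Subgroup.coe_mul]; group
    have hkk : (⟨k, hk⟩ : K) ^ N * k' ^ N = 1 := by
      apply Subtype.ext
      have := hp g
      simp only [Subgroup.coe_pow] at this
      simp only [k', Subgroup.coe_mul, Subgroup.coe_pow, conj_pow, Subgroup.coe_one, inv_pow]
      rw [mul_assoc, ← mul_assoc, ← mul_assoc, ← this]
      group
    have hyN : y ^ N ∈ _root_.commutator K := by
      rw [← Abelianization.ker_of, MonoidHom.mem_ker, map_pow, map_mul, mul_pow, ← map_pow,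
        ← map_pow, ← map_mul, hkk, map_one]
    have : IsOfFinOrder (⟨y ^ N, hyN⟩ : _root_.commutator K) := isOfFinOrder_of_finite _
    have h1 : IsOfFinOrder (y ^ N) := (Submonoid.isOfFinOrder_coe (H := (_root_.commutator K).toSubmonoid)).2 this
    have h2 : IsOfFinOrder y := (isOfFinOrder_pow.1 h1).resolve_right hN.ne'
    rw [← hy]
    exact (Submonoid.isOfFinOrder_coe (H := K.toSubmonoid)).2 h2

theorem aux_values_map {G G' : Type*} [Group G] [Group G'] {n : ℕ} (w : FreeGroup (Fin n))
    (f : G →* G') : f '' wValues w G ⊆ wValues w G' := by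
  rintro _ ⟨_, ⟨g, rfl⟩, rfl⟩
  refine ⟨f ∘ g, ?_⟩
  have : FreeGroup.lift (f ∘ g) = f.comp (FreeGroup.lift g) := by ext; simp
  simp [this]

theorem aux_values_map_surj {G G' : Type*} [Group G] [Group G'] {n : ℕ} (w : FreeGroup (Fin n))
    (f : G →* G') (hf : Function.Surjective f) : f '' wValues w G = wValues w G' := by
  refine (aux_values_map w f).antisymm ?_
  rintro _ ⟨g, rfl⟩
  choose s hs using hf
  refine ⟨_, ⟨s ∘ g, rfl⟩, ?_⟩
  have : FreeGroup.lift g = f.comp (FreeGroup.lift (s ∘ g)) := by ext; simp [hs]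
  simp [this]

theorem aux_values_conj {G : Type*} [Group G] {n : ℕ} (w : FreeGroup (Fin n))
    {x : G} (hx : x ∈ wValues w G) (g : G) : g * x * g⁻¹ ∈ wValues w G :=
  aux_values_map w (MulAut.conj g).toMonoidHom ⟨x, hx, by simp⟩

instance aux_verbal_normal {G : Type*} [Group G] {n : ℕ} (w : FreeGroup (Fin n)) :
    (verbalSubgroup w G).Normal := by
  constructor
  intro x hx g
  have : verbalSubgroup w G ≤ (verbalSubgroup w G).comap (MulAut.conj g).toMonoidHom := by
    refine (closure_le _).2 fun y hy => ?_
    exact subset_closure (by simpa using aux_values_conj w hy g)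
  simpa using this hx

instance aux_iter_normal {G : Type*} [Group G] (H : Subgroup G) [H.Normal] (j : ℕ) :
    (iterCommSub G H j).Normal := by
  induction j with
  | zero => assumption
  | succ j ih => exact inferInstanceAs (⁅iterCommSub G H j, (⊤ : Subgroup G)⁆).Normal

theorem aux_iter_mono {G : Type*} [Group G] {H H' : Subgroup G} (h : H ≤ H') (j : ℕ) :
    iterCommSub G H j ≤ iterCommSub G H' j := by
  induction j with
  | zero => exact h
  | succ j ih => exact commutator_mono ih le_rfl

theorem aux_iter_le {G : Type*} [Group G] (H : Subgroup G) [H.Normal] (j : ℕ) :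
    iterCommSub G H j ≤ H := by
  induction j with
  | zero => exact le_rfl
  | succ j ih => exact (commutator_le_left _ _).trans ih

theorem aux_iter_succ {G : Type*} [Group G] (H : Subgroup G) (j : ℕ) :
    iterCommSub G ⁅H, (⊤ : Subgroup G)⁆ j = ⁅iterCommSub G H j, (⊤ : Subgroup G)⁆ := by
  induction j with
  | zero => rfl
  | succ j ih => exact congrArg (⁅·, (⊤ : Subgroup G)⁆) ih

theorem aux_iter_map {G G' : Type*} [Group G] [Group G'] (f : G →* G') {n : ℕ}
    (w : FreeGroup (Fin n)) (j : ℕ) :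
    (iterCommSub G (verbalSubgroup w G) j).map f ≤ iterCommSub G' (verbalSubgroup w G') j := by
  induction j with
  | zero =>
    simp only [iterCommSub, verbalSubgroup, MonoidHom.map_closure]
    exact closure_mono (aux_values_map w f)
  | succ j ih =>
    simp only [iterCommSub, map_commutator]
    exact commutator_mono ih le_top

theorem aux_iter_map_surj {G G' : Type*} [Group G] [Group G'] (f : G →* G')
    (hf : Function.Surjective f) {n : ℕ} (w : FreeGroup (Fin n)) (j : ℕ) :
    (iterCommSub G (verbalSubgroup w G) j).map f = iterCommSub G' (verbalSubgroup w G') j := by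
  induction j with
  | zero =>
    simp only [iterCommSub, verbalSubgroup, MonoidHom.map_closure, aux_values_map_surj w f hf]
  | succ j ih =>
    simp only [iterCommSub, map_commutator, ih, map_top_of_surjective f hf]

theorem aux_commWord {G : Type*} [Group G] {n : ℕ} (w : FreeGroup (Fin n)) :
    wValues (commWord 1 w) G = {x | ∃ a ∈ wValues w G, ∃ g : G, pcomm a g = x} := by
  have key : ∀ g : Fin (n + 1) → G, FreeGroup.lift g (commWord 1 w) =
      pcomm (FreeGroup.lift (g ∘ Fin.castAdd 1) w) (g (Fin.natAdd n 0)) := by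
    intro g
    have : FreeGroup.lift (g ∘ Fin.castAdd 1) =
      (FreeGroup.lift g).comp (FreeGroup.map (Fin.castAdd 1)) := by ext; simp
    simp [commWord, extendWord, pcomm, this]
  ext x
  constructor
  · rintro ⟨g, rfl⟩
    exact ⟨_, ⟨_, rfl⟩, _, (key g).symm⟩
  · rintro ⟨_, ⟨a, rfl⟩, b, rfl⟩
    refine ⟨Fin.append a (fun _ => b), ?_⟩
    simp only [key]
    congr 1
    · congr 2
      ext i; simp
    · simp

theorem aux_verbal_comm {G : Type*} [Group G] {n : ℕ} (w : FreeGroup (Fin n)) :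
    verbalSubgroup (commWord 1 w) G ≤ ⁅verbalSubgroup w G, (⊤ : Subgroup G)⁆ := by
  refine (closure_le _).2 ?_
  rw [aux_commWord]
  rintro _ ⟨a, ha, g, rfl⟩
  have := commutator_mem_commutator (H₁ := verbalSubgroup w G) (H₂ := ⊤)
    (inv_mem (subset_closure ha)) (mem_top g⁻¹)
  simpa [commutatorElement_def, pcomm] using this

theorem aux_main2 {G : Type u} [Group G] {n : ℕ} (m : ℕ) (w : FreeGroup (Fin n))
    (hw : IsFracConcise.{u} w (m + 1)) (hG : (wValues (commWord 1 w) G).Finite)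
    (C : Subgroup G) [C.FiniteIndex] (hC : ∀ a ∈ wValues w G, ∀ c ∈ C, c * a = a * c) :
    (iterCommSub G (verbalSubgroup (commWord 1 w) G) m : Set G).Finite := by
  have hfin : (wValues w (G ⧸ center G)).Finite := by
    rw [← aux_values_map_surj w (QuotientGroup.mk' (center G)) (QuotientGroup.mk'_surjective _)]
    have hG' : Finite (wValues (commWord 1 w) G) := hG
    have hmem : ∀ a ∈ wValues w G, ∀ g, pcomm a g ∈ wValues (commWord 1 w) G := by
      intro a ha g
      rw [aux_commWord]
      exact ⟨a, ha, g, rfl⟩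
    let F : wValues w G → (G ⧸ C → wValues (commWord 1 w) G) := fun a q =>
      ⟨pcomm a q.out, hmem a a.2 _⟩
    have hF : ∀ a b, F a = F b → QuotientGroup.mk' (center G) (a : G) = QuotientGroup.mk' (center G) (b : G) := by
      intro a b hab
      have h1 : ∀ g : G, pcomm (a : G) g = pcomm (b : G) g := by
        intro g
        have h2 : pcomm (a : G) (g : G ⧸ C).out = pcomm (b : G) (g : G ⧸ C).out :=
          congrArg Subtype.val (congrFun hab (g : G ⧸ C))
        have h4 : (g : G ⧸ C).out⁻¹ * g ∈ C := by
          rw [← QuotientGroup.eq, QuotientGroup.out_eq']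
        generalize (g : G ⧸ C).out = g' at h2 h4
        obtain ⟨c, rfl⟩ : ∃ c, g = g' * c := ⟨g'⁻¹ * g, by group⟩
        simp only [inv_mul_cancel_left] at h4
        have h5 : ∀ a ∈ wValues w G, pcomm a (g' * c) = pcomm a g' := by
          intro a ha
          have h6 := hC _ (aux_values_conj w ha g'⁻¹) c h4
          calc pcomm a (g' * c) = a⁻¹ * c⁻¹ * ((g'⁻¹ * a * g'⁻¹⁻¹) * c) := by
                simp only [pcomm]; group
            _ = pcomm a g' := by rw [← h6]; simp only [pcomm]; group
        rw [h5 a a.2, h5 b b.2, h2]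
      rw [QuotientGroup.mk'_apply, QuotientGroup.mk'_apply, QuotientGroup.eq]
      have hz : ∀ g : G, g * (b * (a : G)⁻¹) = (b * (a : G)⁻¹) * g := by
        intro g
        have h7 := h1 g
        simp only [pcomm] at h7
        have h9 : (b : G) = (g⁻¹ * b * g) * ((a : G)⁻¹ * g⁻¹ * a * g)⁻¹ := by
          rw [h7]; group
        calc g * (b * (a : G)⁻¹) = g * (((g⁻¹ * b * g) * ((a : G)⁻¹ * g⁻¹ * a * g)⁻¹) * (a : G)⁻¹) := by
              rw [← h9]
          _ = _ := by group
      have hz' : (a : G)⁻¹ * b = b * (a : G)⁻¹ := by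
        calc (a : G)⁻¹ * b = (a : G)⁻¹ * ((b * (a : G)⁻¹) * a) := by group
          _ = _ := by rw [← hz a]; group
      rw [hz', mem_center_iff]
      exact hz
    have hch : ∀ y : ((QuotientGroup.mk' (center G)) '' wValues w G),
        ∃ a : wValues w G, QuotientGroup.mk' (center G) (a : G) = y := by
      rintro ⟨_, a, ha, rfl⟩
      exact ⟨⟨a, ha⟩, rfl⟩
    choose t ht using hch
    refine Set.finite_coe_iff.1 (Finite.of_injective (fun y => F (t y)) ?_)
    intro y y' hy
    apply Subtype.ext
    rw [← ht y, ← ht y']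
    exact hF _ _ hy
  have h1 := hw (G ⧸ center G) hfin
  simp only [Nat.add_sub_cancel] at h1
  rw [← aux_iter_map_surj (QuotientGroup.mk' (center G)) (QuotientGroup.mk'_surjective _)] at h1
  have h2 := aux_baer (G := G) (iterCommSub G (verbalSubgroup w G) m) C ?_ (by simpa using h1)
  · refine h2.subset ?_
    rw [← aux_iter_succ]
    exact aux_iter_mono (aux_verbal_comm w) m
  · intro c hc k hk
    have hk' := aux_iter_le _ m hk
    have : verbalSubgroup w G ≤ centralizer {c} := by
      refine (closure_le _).2 fun a ha => ?_
      rw [SetLike.mem_coe, mem_centralizer_singleton_iff]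
      exact (hC a ha c hc).symm
    exact (mem_centralizer_singleton_iff.1 (this hk')).symm

theorem aux_main {n : ℕ} (m : ℕ) (w : FreeGroup (Fin n))
    (hw : IsFracConcise.{u} w (m + 1)) : IsFracConcise.{u} (commWord 1 w) (m + 1) := by
  intro G _ hG
  simp only [Nat.add_sub_cancel]
  let C := centralizer (wValues (commWord 1 w) G)
  have hCi : C.FiniteIndex := aux_centralizer _ hG fun x hx g => aux_values_conj _ hx g
  have hmem : ∀ a ∈ wValues w G, ∀ g, pcomm a g ∈ wValues (commWord 1 w) G := by
    intro a ha g
    rw [aux_commWord]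
    exact ⟨a, ha, g, rfl⟩
  have hCc : ∀ c ∈ C, ∀ g : G, g * c * g⁻¹ ∈ C := by
    intro c hc g
    rw [mem_centralizer_iff] at hc ⊢
    intro x hx
    have := hc _ (aux_values_conj _ hx g⁻¹)
    calc x * (g * c * g⁻¹) = g * (g⁻¹ * x * g⁻¹⁻¹ * c) * g⁻¹ := by group
      _ = _ := by rw [this]; group
  let X : Set G := {x | ∃ a ∈ wValues w G, ∃ c ∈ C, pcomm a c = x}
  have hXfin : X.Finite := hG.subset (by rintro _ ⟨a, ha, c, -, rfl⟩; exact hmem a ha c)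
  have hXc : ∀ x ∈ X, ∀ g : G, g * x * g⁻¹ ∈ X := by
    rintro _ ⟨a, ha, c, hc, rfl⟩ g
    exact ⟨_, aux_values_conj w ha g, _, hCc c hc g, by simp only [pcomm]; group⟩
  have hXt : ∀ x ∈ X, IsOfFinOrder x := by
    rintro _ ⟨a, ha, c, hc, rfl⟩
    have hcomm : pcomm a c * c = c * pcomm a c := mem_centralizer_iff.1 hc _ (hmem a ha c)
    have hpow : ∀ i : ℕ, pcomm a c ^ i = pcomm a (c ^ i) := by
      intro i
      induction i with
      | zero => simp [pcomm]
      | succ i ih =>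
        have hci : c ^ i ∈ C := C.pow_mem hc i
        have h1 : pcomm a c * c ^ i = c ^ i * pcomm a c := mem_centralizer_iff.1 hci _ (hmem a ha c)
        rw [pow_succ, ih]
        have h2 : pcomm a (c ^ (i + 1)) = pcomm a (c ^ i) * ((c ^ i)⁻¹ * (pcomm a c * c ^ i)) := by
          simp only [pcomm, pow_succ']; group
        rw [h2, h1, inv_mul_cancel_left]
    have hfin : (Set.range fun i : ℕ => pcomm a c ^ i).Finite := by
      refine hG.subset ?_
      rintro _ ⟨i, rfl⟩
      simp only [hpow]
      exact hmem a ha _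
    by_contra hno
    exact (Set.infinite_range_of_injective (injective_pow_iff_not_isOfFinOrder.2 hno)) hfin
  have hT := aux_dietzmann X hXfin hXc hXt
  let T := closure X
  have hTn : T.Normal := by
    constructor
    intro x hx g
    have : T ≤ T.comap (MulAut.conj g).toMonoidHom := by
      refine (closure_le _).2 fun y hy => ?_
      exact subset_closure (by simpa using hXc y hy g)
    simpa using this hx
  let f := QuotientGroup.mk' T
  have hf : Function.Surjective f := QuotientGroup.mk'_surjective T
  have hCm : (C.map f).FiniteIndex := by
    refine ⟨fun h0 => hCi.index_ne_zero ?_⟩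
    have := index_map_dvd C hf
    rw [h0] at this
    exact zero_dvd_iff.1 this
  have h := aux_main2 (G := G ⧸ T) m w hw
    (by rw [← aux_values_map_surj _ f hf]; exact hG.image _) (C.map f) (by
      rw [← aux_values_map_surj _ f hf]
      rintro _ ⟨a, ha, rfl⟩ _ ⟨c, hc, rfl⟩
      have h1 : f (pcomm a c) = 1 := by
        rw [← MonoidHom.mem_ker, QuotientGroup.ker_mk']
        exact subset_closure ⟨a, ha, c, hc, rfl⟩
      have h2 : a * c = c * a * pcomm a c := by simp only [pcomm]; group
      rw [← map_mul, ← map_mul, h2, map_mul f (c * a), h1, mul_one])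
  rw [← aux_iter_map_surj f hf] at h
  refine aux_finite_map f _ h ?_
  rw [QuotientGroup.ker_mk']
  exact hT

theorem aux_countable {G : Type*} [Group G] (S : Set G) (hS : S.Countable) :
    Countable (closure S) := by
  have : Countable S := hS
  have h1 : Countable (FreeGroup S) := by
    unfold FreeGroup
    infer_instance
  have h2 : closure S = (FreeGroup.lift (Subtype.val : S → G)).range := by
    rw [FreeGroup.range_lift_eq_closure, Subtype.range_coe]
  rw [h2]
  exact (MonoidHom.rangeRestrict_surjective (FreeGroup.lift (Subtype.val : S → G))).countable

theorem aux_countable_sup {G : Type*} [Group G] (H H' : Subgroup G) [hH : Countable H]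
    [hH' : Countable H'] : Countable (H ⊔ H' : Subgroup G) := by
  rw [sup_eq_closure]
  exact aux_countable _ (Set.Countable.union hH hH')

theorem aux_countable_iSup {G : Type*} [Group G] (H : ℕ → Subgroup G)
    (hH : ∀ i, Countable (H i)) : Countable (⨆ i, H i : Subgroup G) := by
  rw [iSup_eq_closure]
  exact aux_countable _ (Set.countable_iUnion hH)

theorem aux_I_mono {G : Type*} [Group G] {n : ℕ} (w : FreeGroup (Fin n)) (j : ℕ)
    {H H' : Subgroup G} (h : H ≤ H') :
    (iterCommSub H (verbalSubgroup w H) j).map H.subtype ≤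
      (iterCommSub H' (verbalSubgroup w H') j).map H'.subtype := by
  have h1 : H.subtype = H'.subtype.comp (inclusion h) := rfl
  rw [h1, ← map_map]
  exact map_mono (aux_iter_map _ w j)

theorem aux_local {G : Type*} [Group G] {n : ℕ} (w : FreeGroup (Fin n)) (j : ℕ) :
    ∀ x ∈ iterCommSub G (verbalSubgroup w G) j, ∃ H : Subgroup G, Countable H ∧
      x ∈ (iterCommSub H (verbalSubgroup w H) j).map H.subtype := by
  have step : ∀ (j : ℕ) (S : Set G), (∀ x ∈ S, ∃ H : Subgroup G, Countable H ∧
      x ∈ (iterCommSub H (verbalSubgroup w H) j).map H.subtype) →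
      ∀ x ∈ closure S, ∃ H : Subgroup G, Countable H ∧
      x ∈ (iterCommSub H (verbalSubgroup w H) j).map H.subtype := by
    intro j S hS x hx
    induction hx using closure_induction with
    | mem x hx => exact hS x hx
    | one => exact ⟨⊥, inferInstance, one_mem _⟩
    | mul x y _ _ h1 h2 =>
      obtain ⟨H, hH, hx⟩ := h1
      obtain ⟨H', hH', hy⟩ := h2
      exact ⟨H ⊔ H', aux_countable_sup H H',
        mul_mem (aux_I_mono w j le_sup_left hx) (aux_I_mono w j le_sup_right hy)⟩
    | inv x _ h1 =>
      obtain ⟨H, hH, hx⟩ := h1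
      exact ⟨H, hH, inv_mem hx⟩
  induction j with
  | zero =>
    refine step 0 _ ?_
    rintro _ ⟨g, rfl⟩
    let H := closure (Set.range g)
    refine ⟨H, aux_countable _ (Set.countable_range g), ?_⟩
    let g' : Fin n → H := fun i => ⟨g i, subset_closure ⟨i, rfl⟩⟩
    refine ⟨FreeGroup.lift g' w, subset_closure ⟨g', rfl⟩, ?_⟩
    have : FreeGroup.lift g = H.subtype.comp (FreeGroup.lift g') := by ext; simp [g']
    simp [this]
  | succ j ih =>
    refine step (j + 1) _ ?_
    rintro _ ⟨k, hk, g, -, rfl⟩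
    obtain ⟨H, hH, hx⟩ := ih k hk
    have hz : Countable (zpowers g) := inferInstance
    have hg : g ∈ H ⊔ zpowers g := (le_sup_right : zpowers g ≤ _) (mem_zpowers g)
    obtain ⟨y, hy, rfl⟩ := aux_I_mono w j (le_sup_left : H ≤ H ⊔ zpowers g) hx
    refine ⟨H ⊔ zpowers g, aux_countable_sup _ _, ⁅y, ⟨g, hg⟩⁆, ?_, ?_⟩
    · exact commutator_mem_commutator hy (mem_top _)
    · simp [commutatorElement_def]

theorem aux_univ {n : ℕ} (k : ℕ) (w : FreeGroup (Fin n))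
    (hw : IsFracConcise.{u} w k) : IsFracConcise.{v} w k := by
  intro G _ hG
  by_contra hinf
  have hinf' : Set.Infinite (iterCommSub G (verbalSubgroup w G) (k - 1) : Set G) := hinf
  let e := hinf'.natEmbedding
  choose H hH hx using fun i : ℕ => aux_local w (k - 1) (e i : G) (e i).2
  let L : Subgroup G := ⨆ i, H i
  have hL : Countable L := aux_countable_iSup H hH
  have hLw : (wValues w L).Finite := by
    refine Set.Finite.of_finite_image (f := L.subtype) (hG.subset (aux_values_map w L.subtype)) ?_
    exact L.subtype_injective.injOn
  have hsm : Small.{u} L := Countable.toSmall L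
  let φ : Shrink.{u} L ≃* L := Shrink.mulEquiv
  have hS := hw (Shrink.{u} L) (by
    rw [← aux_values_map_surj w φ.symm.toMonoidHom φ.symm.surjective]
    exact hLw.image _)
  have hI : ((iterCommSub L (verbalSubgroup w L) (k - 1)).map L.subtype : Set G).Finite := by
    rw [← aux_iter_map_surj φ.toMonoidHom φ.surjective]
    exact (hS.image _).image _
  refine Set.infinite_range_of_injective (f := fun i => (e i : G))
    (Subtype.val_injective.comp e.injective) (hI.subset ?_)
  rintro _ ⟨i, rfl⟩
  exact aux_I_mono w (k - 1) (le_iSup H i) (hx i)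

end Helpers

/-- if `w` is `(1/(m+1))`-concise, then so is `v = [w, x_{n+1}]`. -/
theorem statement_8 {n : ℕ} (m : ℕ) (w : FreeGroup (Fin n))
    (hw : IsFracConcise w (m + 1)) :
    IsFracConcise (commWord 1 w) (m + 1) := by
  exact aux_univ (m + 1) _ (aux_main m w hw)
end

section
/- Let G be a group and let y, b ∈ G be such that b^2 = 1 and [y, y^b] = 1 (i.e., y commutes with b^{-1}yb). Then for every m ≥ 0 the iterated commutator [y, b, b, ..., b] with b repeated m+1 times equals (y^{(-1)^m · 2^m})^b · y^{(-1)^{m+1} · 2^m}. -/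
/-- if `b^2 = 1` and `[y, y^b] = 1`, then for every `m ≥ 0`,
`[y, b, ..., b]` (`b` repeated `m + 1` times) equals
`(y^{(-1)^m 2^m})^b ⬝ y^{(-1)^{m+1} 2^m}`. -/
theorem statement_9 {G : Type*} [Group G] (y b : G) (hb : b ^ 2 = 1)
    (hyb : pcomm y (b⁻¹ * y * b) = 1) (m : ℕ) :
    iterPcomm y b (m + 1) =
      b⁻¹ * y ^ ((-1 : ℤ) ^ m * 2 ^ m) * b * y ^ ((-1 : ℤ) ^ (m + 1) * 2 ^ m) := by
  have hbb : b * b = 1 := by rw [← pow_two]; exact hb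
  obtain ⟨z, hz⟩ : ∃ z, z = b⁻¹ * y * b := ⟨_, rfl⟩
  rw [← hz] at hyb
  have hc : Commute y z := by
    have h : (z * y)⁻¹ * (y * z) = 1 := by
      rw [← hyb]; unfold pcomm; group
    exact (inv_mul_eq_one.mp h).symm
  have h1 : SemiconjBy b z y := by
    change b * z = y * b
    rw [hz]; group
  have h2 : SemiconjBy b y z := by
    change b * y = z * b
    have hi : b⁻¹ = b := inv_eq_of_mul_eq_one_left hbb
    rw [hz, hi, mul_assoc, hbb, mul_one]
  have c1 : ∀ n : ℤ, b⁻¹ * y ^ n * b = z ^ n := fun n => by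
    rw [mul_assoc, ← (h1.zpow_right n).eq, inv_mul_cancel_left]
  have c2 : ∀ n : ℤ, b⁻¹ * z ^ n * b = y ^ n := fun n => by
    rw [mul_assoc, ← (h2.zpow_right n).eq, inv_mul_cancel_left]
  rw [c1]
  have step : ∀ n : ℤ, pcomm (z ^ n * y ^ (-n)) b = z ^ (-2 * n) * y ^ (2 * n) := fun n => by
    have e : pcomm (z ^ n * y ^ (-n)) b
        = (z ^ n * y ^ (-n))⁻¹ * ((b⁻¹ * z ^ n * b) * (b⁻¹ * y ^ (-n) * b)) := by
      unfold pcomm; simp only [mul_assoc, mul_inv_cancel_left]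
    rw [e, c1, c2, mul_inv_rev, ← zpow_neg, ← zpow_neg, neg_neg]
    have hcn : y ^ n * z ^ (-n) = z ^ (-n) * y ^ n := (hc.zpow_zpow n (-n)).eq
    have t1 : -2 * n = -n + -n := by ring
    have t2 : 2 * n = n + n := by ring
    rw [t1, t2, hcn, mul_assoc, ← mul_assoc (y ^ n), hcn, mul_assoc, ← zpow_add,
      ← mul_assoc, ← zpow_add]
  induction m with
  | zero =>
    have := c1 1
    rw [zpow_one, zpow_one] at this
    have h0 : iterPcomm y b 1 = y⁻¹ * (b⁻¹ * y * b) := by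
      simp only [iterPcomm, pcomm, mul_assoc]
    rw [h0, this]
    simpa using hc.inv_left.eq
  | succ k ih =>
    have h0 : iterPcomm y b (k + 1 + 1) = pcomm (iterPcomm y b (k + 1)) b := rfl
    have e1 : (-1 : ℤ) ^ (k + 1) * 2 ^ k = -((-1) ^ k * 2 ^ k) := by ring
    rw [h0, ih, e1, step]
    congr 2 <;> ring
end
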